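/- Let Q be a finite quiver and d ∈ ℕ^{Q₀} ∖ {0} such that (Q,d) has property (P). Set D := Σ_{i∈Q₀} d_i² − 1 + 2(1 − ⟨d,d⟩), where ⟨d,d⟩ := Σ_i d_i² − Σ_{a∈Q₁} d_{s(a)} d_{t(a)}. Then there is a finite set S of primes such that for every prime p ∉ S and every power q of p, the sequence n ↦ q^{−nD} · #{ (x,y) : x_a ∈ M_{d_{t(a)} × d_{s(a)}}(𝔽_q[t]/(t^n)), y_a ∈ M_{d_{s(a)} × d_{t(a)}}(𝔽_q[t]/(t^n)) for a ∈ Q₁, and Σ_{a : t(a)=i} x_a y_a − Σ_{a : s(a)=i} y_a x_a = 0 for every i ∈ Q₀ } converges as n → ∞. -/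

import Mathlib

/-- A finite quiver (equivalently, a finite multigraph with a chosen orientation of each
edge): finitely many vertices and arrows, with source and target maps. -/
structure FinQuiver where
  V : Type
  E : Type
  [fintypeV : Fintype V]
  [fintypeE : Fintype E]
  [decEqV : DecidableEq V]
  s : E → V
  t : E → V

attribute [instance] FinQuiver.fintypeV FinQuiver.fintypeE FinQuiver.decEqV

namespace FinQuiver

/-- The adjacency (simple) graph of the underlying multigraph: two vertices are adjacent
if some edge joins them.  Connectivity of the multigraph only depends on this graph. -/
def adjGraph (G : FinQuiver) : SimpleGraph G.V :=
  SimpleGraph.fromRel fun a b => ∃ e : G.E, G.s e = a ∧ G.t e = b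

/-- The number of connected components of the underlying multigraph. -/
noncomputable def c (G : FinQuiver) : ℕ :=
  Nat.card G.adjGraph.ConnectedComponent

/-- The Betti number `b(Q) = c(Q) - #Q₀ + #Q₁` of the underlying multigraph. -/
noncomputable def betti (G : FinQuiver) : ℤ :=
  (G.c : ℤ) - Fintype.card G.V + Fintype.card G.E

/-- The underlying multigraph is connected. -/
def Connected (G : FinQuiver) : Prop := G.adjGraph.Connected

/-- Deletion of the edge `e`. -/
noncomputable def deleteEdge (G : FinQuiver) (e : G.E) : FinQuiver :=
  letI : DecidableEq G.E := Classical.decEq _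
  { V := G.V, E := {e' : G.E // e' ≠ e}, s := fun e' => G.s e'.1, t := fun e' => G.t e'.1 }

/-- The underlying multigraph is 2-connected: it is connected and stays connected after
deleting any single edge. -/
def TwoConnected (G : FinQuiver) : Prop :=
  G.Connected ∧ ∀ e : G.E, (G.deleteEdge e).Connected

/-- Restriction `Q|_I` to a subset `I` of the vertices (full sub(multi)graph). -/
noncomputable def restrictV (G : FinQuiver) (I : Set G.V) : FinQuiver :=
  letI : DecidablePred (· ∈ I) := Classical.decPred _
  { V := ↥I
    E := {e : G.E // G.s e ∈ I ∧ G.t e ∈ I}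
    s := fun e => ⟨G.s e.1, e.2.1⟩
    t := fun e => ⟨G.t e.1, e.2.2⟩ }

/-- Restriction `Q|_J` to a subset `J` of the edges (keeping all vertices). -/
noncomputable def restrictE (G : FinQuiver) (J : Set G.E) : FinQuiver :=
  letI : DecidablePred (· ∈ J) := Classical.decPred _
  { V := G.V
    E := ↥J
    s := fun e => G.s e.1
    t := fun e => G.t e.1 }

end FinQuiver

/-- The ring of truncated polynomials `F[t]/(t^α)`. -/
abbrev TruncRing (F : Type) [CommRing F] (α : ℕ) : Type :=
  Polynomial F ⧸ Ideal.span {(Polynomial.X : Polynomial F) ^ α}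

/-- The image of `t` in `F[t]/(t^α)`. -/
noncomputable def tvar (F : Type) [CommRing F] (α : ℕ) : TruncRing F α :=
  Ideal.Quotient.mk _ (Polynomial.X : Polynomial F)
/-- A locally free representation of rank `r` of the quiver `G` over `R`: a matrix
`x_a` of size `r_{t(a)} × r_{s(a)}` for every arrow `a`. -/
abbrev QRep (G : FinQuiver) (R : Type) [CommRing R] (r : G.V → ℕ) : Type :=
  ∀ a : G.E, Matrix (Fin (r (G.t a))) (Fin (r (G.s a))) R

/-- The second component of a pair in the doubled quiver: a matrix `y_a` of size
`r_{s(a)} × r_{t(a)}` for every arrow `a`. -/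
abbrev QCoRep (G : FinQuiver) (R : Type) [CommRing R] (r : G.V → ℕ) : Type :=
  ∀ a : G.E, Matrix (Fin (r (G.s a))) (Fin (r (G.t a))) R

/-- The moment map of the quiver `G`:
`μ(x,y)_i := Σ_{a : t(a)=i} x_a y_a − Σ_{a : s(a)=i} y_a x_a`. -/
noncomputable def momentMap (G : FinQuiver) {R : Type} [CommRing R] {r : G.V → ℕ}
    (x : QRep G R r) (y : QCoRep G R r) (i : G.V) : Matrix (Fin (r i)) (Fin (r i)) R :=
  (∑ a : G.E, if h : G.t a = i then
      cast (congrArg (fun v => Matrix (Fin (r v)) (Fin (r v)) R) h) (x a * y a) else 0)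
  - ∑ a : G.E, if h : G.s a = i then
      cast (congrArg (fun v => Matrix (Fin (r v)) (Fin (r v)) R) h) (y a * x a) else 0

/-- The Euler form `⟨r,r'⟩ := Σ_{i∈Q₀} r_i r'_i − Σ_{a∈Q₁} r_{s(a)} r'_{t(a)}` of `G`. -/
def eulerForm (G : FinQuiver) (r r' : G.V → ℕ) : ℤ :=
  ∑ i : G.V, (r i : ℤ) * (r' i : ℤ) - ∑ a : G.E, (r (G.s a) : ℤ) * (r' (G.t a) : ℤ)

/-- The change-of-basis action of `GL_{α,r} = ∏_i GL_{r_i}(R)` on representations: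
`(g·x)_a := g_{t(a)} x_a g_{s(a)}⁻¹`. -/
def glAct (G : FinQuiver) {R : Type} [CommRing R] {r : G.V → ℕ}
    (g : ∀ i : G.V, (Matrix (Fin (r i)) (Fin (r i)) R)ˣ) (x : QRep G R r) : QRep G R r :=
  fun a => (g (G.t a) : Matrix (Fin (r (G.t a))) (Fin (r (G.t a))) R) * x a *
    (((g (G.s a))⁻¹ : (Matrix (Fin (r (G.s a))) (Fin (r (G.s a))) R)ˣ) :
      Matrix (Fin (r (G.s a))) (Fin (r (G.s a))) R)

/-- `A` is block-diagonal for the splittings `m = m' + (m − m')`, `n = n' + (n − n')`: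
all entries `A k l` with `(k < m') ↮ (l < n')` vanish. -/
def IsBlockDiag {R : Type} [CommRing R] {m n : ℕ} (m' n' : ℕ)
    (A : Matrix (Fin m) (Fin n) R) : Prop :=
  ∀ (k : Fin m) (l : Fin n), ¬ ((k : ℕ) < m' ↔ (l : ℕ) < n') → A k l = 0

/-- `r'` is the rank vector of a direct summand of the representation `x`: for some
complementary rank vector `r''` with `r' + r'' = r`, some change of basis `g` makes all
matrices of `x` block-diagonal with diagonal blocks of sizes prescribed by `r'`, `r''`.
(In particular `r' = 0` and `r' = r` always qualify.) -/
def IsSummandRank (G : FinQuiver) {R : Type} [CommRing R] {r : G.V → ℕ}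
    (x : QRep G R r) (r' : G.V → ℕ) : Prop :=
  ∃ r'' : G.V → ℕ, (∀ i, r' i + r'' i = r i) ∧
    ∃ g : ∀ i : G.V, (Matrix (Fin (r i)) (Fin (r i)) R)ˣ,
      ∀ a : G.E, IsBlockDiag (r' (G.t a)) (r' (G.s a)) (glAct G g x a)

/-- `x` is decomposable: it is a direct sum of two representations of nonzero ranks. -/
def Decomposable (G : FinQuiver) {R : Type} [CommRing R] {r : G.V → ℕ}
    (x : QRep G R r) : Prop :=
  ∃ r' r'' : G.V → ℕ, (∀ i, r' i + r'' i = r i) ∧ r' ≠ 0 ∧ r'' ≠ 0 ∧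
    ∃ g : ∀ i : G.V, (Matrix (Fin (r i)) (Fin (r i)) R)ˣ,
      ∀ a : G.E, IsBlockDiag (r' (G.t a)) (r' (G.s a)) (glAct G g x a)
/-- `Q` is totally negative: every vertex carries at least two loops, and every pair of
distinct vertices is joined by at least one arrow. -/
def TotallyNegative (G : FinQuiver) : Prop :=
  (∀ i : G.V, 2 ≤ (Finset.univ.filter fun a : G.E => G.s a = i ∧ G.t a = i).card) ∧
  (∀ i j : G.V, i ≠ j → ∃ a : G.E, (G.s a = i ∧ G.t a = j) ∨ (G.s a = j ∧ G.t a = i))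

/-- `(Q,d)` has property (P): `Q` is totally negative, and it is not the case that the
support of `d` consists of exactly two vertices `i ≠ j` joined by exactly one arrow of
`Q` with `d_i = d_j = 1`. -/
def PropertyP (G : FinQuiver) (d : G.V → ℕ) : Prop :=
  TotallyNegative G ∧
  ¬ ∃ i j : G.V, i ≠ j ∧ {v : G.V | d v ≠ 0} = ({i, j} : Set G.V) ∧
      (Finset.univ.filter fun a : G.E =>
        (G.s a = i ∧ G.t a = j) ∨ (G.s a = j ∧ G.t a = i)).card = 1 ∧
      d i = 1 ∧ d j = 1

/-!
For fixed `x` the map `y ↦ μ(x, y)` is adjoint, under the trace pairing, to `ξ ↦ [ξ, x]` on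
`∏ i, gl_{d i}` over `F[t]/(t^n)`. So up to an explicit power of `q` the zero fibre counts the
commuting pairs `(ξ, x)`, and summing over `x` first leaves `∑ ξ, q ^ ∑ k < n, α (A_{k+1})`. Here
`A_k` (`stage`) is the algebra of constant terms of the series that commute with `ξ` modulo
`t ^ k`, and `α A` (`arrowRank`) is the dimension of the part of `A` along the arrows.

A jet with scalar constant term contributes `q ^ α ⊤` times the term of a jet of length `n - 1`,
and there are `q` such constants. The other jets are sorted by their last stage `A`: prolonging a
jet can only shrink its stage, and at most `q ^ (α ⊤ - α A)` prolongations keep it equal to `A`.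
After division by `q ^ (n (α ⊤ + 1))` their contribution is therefore dominated by a triangular
recursion with diagonal entries `1 / q`, hence summable, and the normalised sums converge.

The bound on prolongations is `dim ker + α A ≤ α ⊤`, the kernel being that of the pairing of
a matrix with the commutators of `A`. As `A` commutes with a nonscalar matrix, it reduces to the
inequality `-1 ≤ peirceDefect` for modules with a nonscalar endomorphism over an algebraically
closed field. This is an induction splitting off a simple submodule; for totally negative quivers
the defect is never below `-2`, and property (P) excludes the case in which it equals `-2`.
-/

open Module

/-! ### Dimensions of images and kernels -/

section Finrank

variable {K M P Q : Type*} [Field K] [AddCommGroup M] [Module K M] [FiniteDimensional K M]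
  [AddCommGroup P] [Module K P] [AddCommGroup Q] [Module K Q]

lemma finrank_map_add_finrank_inf_ker (f : M →ₗ[K] P) (S : Submodule K M) :
    finrank K (S.map f) + finrank K (S ⊓ LinearMap.ker f : Submodule K M) = finrank K S := by
  rw [← LinearMap.finrank_range_add_finrank_ker (f.domRestrict S), LinearMap.range_domRestrict,
    LinearMap.ker_domRestrict, ← Submodule.map_comap_subtype, Submodule.finrank_map_subtype_eq]

lemma finrank_map_eq_add_of_ker_le (f : M →ₗ[K] P) (g : M →ₗ[K] Q)
    (hfg : LinearMap.ker f ≤ LinearMap.ker g) (S : Submodule K M) :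
    finrank K (S.map f) = finrank K (S.map g)
      + finrank K ((S ⊓ LinearMap.ker g : Submodule K M).map f) := by
  have hf := finrank_map_add_finrank_inf_ker f S
  have hg := finrank_map_add_finrank_inf_ker g S
  have hker := finrank_map_add_finrank_inf_ker f (S ⊓ LinearMap.ker g)
  rw [inf_assoc, inf_eq_right.2 hfg] at hker
  omega

lemma finrank_iSup_le_sum {ι : Type*} [Fintype ι] (S : ι → Submodule K M) :
    finrank K (⨆ i, S i : Submodule K M) ≤ ∑ i, finrank K (S i) := by
  classical
  rw [← Finset.sup_univ_eq_iSup]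
  induction (Finset.univ : Finset ι) using Finset.induction_on with
  | empty => simp
  | insert i s hi ih =>
    rw [Finset.sup_insert, Finset.sum_insert hi]
    exact (Submodule.finrank_add_le_finrank_add_finrank _ _).trans (by omega)

omit [FiniteDimensional K M] in
lemma finrank_span_singleton_le_one (u : M) : finrank K (Submodule.span K {u}) ≤ 1 :=
  (finrank_span_le_card {u}).trans (by simp)

lemma finrank_le_of_range_le_of_le_ker [FiniteDimensional K P]
    (S : Submodule K (M →ₗ[K] P)) (Y : Submodule K P) (Z : Submodule K M)
    (hY : ∀ f ∈ S, LinearMap.range f ≤ Y) (hZ : ∀ f ∈ S, Z ≤ LinearMap.ker f) :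
    finrank K S ≤ finrank K Y * (finrank K M - finrank K Z) := by
  let Φ : ((M ⧸ Z) →ₗ[K] Y) →ₗ[K] (M →ₗ[K] P) :=
    (LinearMap.lcomp K P Z.mkQ).comp (LinearMap.llcomp K (M ⧸ Z) Y P Y.subtype)
  have hS : S ≤ LinearMap.range Φ := by
    intro f hf
    refine ⟨Z.liftQ (f.codRestrict Y fun x => hY f hf ⟨x, rfl⟩) fun x hx => ?_, ?_⟩
    · simpa [Subtype.ext_iff] using hZ f hf hx
    · ext x
      simp [Φ]
  calc finrank K S ≤ finrank K (LinearMap.range Φ) := Submodule.finrank_mono hS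
    _ ≤ finrank K ((M ⧸ Z) →ₗ[K] Y) := LinearMap.finrank_range_le Φ
    _ = finrank K Y * (finrank K M - finrank K Z) := by
      rw [Module.finrank_linearMap, Submodule.finrank_quotient, mul_comm]

lemma exists_forall_apply_eq_smul_of_finrank_le_one (h : finrank K M ≤ 1) (f : M →ₗ[K] M) :
    ∃ c : K, ∀ u, f u = c • u := by
  obtain ⟨v, hv⟩ := finrank_le_one_iff.1 h
  obtain ⟨c, hc⟩ := hv (f v)
  refine ⟨c, fun u => ?_⟩
  obtain ⟨b, rfl⟩ := hv u
  rw [map_smul, ← hc, smul_comm]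

end Finrank

section SimpleModule

lemma exists_isSimpleModule_submodule {A U : Type*} [Ring A] [AddCommGroup U] [Module A U]
    [IsArtinian A U] [Nontrivial U] : ∃ U' : Submodule A U, IsSimpleModule A U' := by
  obtain ⟨U', hU'⟩ := IsAtomic.exists_atom (Submodule A U)
  exact ⟨U', isSimpleModule_iff_isAtom.2 hU'⟩

variable {K A U : Type*} [Field K] [Ring A] [Algebra K A] [AddCommGroup U] [Module K U]
  [Module A U] [IsScalarTower K A U] [FiniteDimensional K U]

lemma finiteDimensional_of_submodule (U' : Submodule A U) : FiniteDimensional K U' :=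
  FiniteDimensional.of_injective (U'.subtype.restrictScalars K) U'.injective_subtype

lemma finrank_eq_finrank_add_finrank_quotient (U' : Submodule A U) :
    finrank K U = finrank K (U'.restrictScalars K) + finrank K (U ⧸ U') := by
  have := Submodule.finrank_le (U'.restrictScalars K)
  rw [Submodule.finrank_quotient]
  change _ = _ + (_ - finrank K (U'.restrictScalars K))
  omega

lemma finrank_restrictScalars_pos_of_isSimpleModule (U' : Submodule A U) [IsSimpleModule A U'] :
    0 < finrank K (U'.restrictScalars K) := by
  have : Nontrivial (U'.restrictScalars K) := IsSimpleModule.nontrivial A U'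
  exact Module.finrank_pos

-- Over an algebraically closed field `End A U = K`, so Jacobson density reaches every linear map.
lemma exists_forall_smul_eq_of_isSimpleModule [IsAlgClosed K] [IsSimpleModule A U]
    (f : U →ₗ[K] U) : ∃ a : A, ∀ u : U, a • u = f u := by
  have schur := (IsSimpleModule.algebraMap_end_bijective_of_isAlgClosed (A := A) (V := U) K).2
  let f' : End (End A U) U :=
    { toFun := f
      map_add' := map_add f
      map_smul' := by
        intro g u
        obtain ⟨c, rfl⟩ := schur g
        simp }
  obtain ⟨s, hs⟩ := Module.Finite.fg_top (R := K) (M := U)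
  obtain ⟨a, ha⟩ := jacobson_density (R := A) f' s
  have hspan : Set.EqOn (Algebra.lsmul K K U a) f s := fun u hu => (ha u hu).symm
  exact ⟨a, fun u => LinearMap.congr_fun (LinearMap.ext_on hs hspan) u⟩

end SimpleModule

/-! ### Spaces of operators induced by an algebra -/

section QuotAnn

variable (K : Type*) {A U : Type*} [Field K] [Ring A] [Algebra K A] [AddCommGroup U] [Module A U]

/-- The annihilator of `U ⧸ U'` as a `K`-subspace: the elements mapping `U` into `U'`. -/
def quotAnn (U' : Submodule A U) : Submodule K A :=
  (Module.annihilator A (U ⧸ U')).restrictScalars K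

variable {K} {U' : Submodule A U}

lemma mem_quotAnn {a : A} : a ∈ quotAnn K U' ↔ ∀ u : U, a • u ∈ U' := by
  rw [quotAnn, Submodule.restrictScalars_mem, Module.mem_annihilator,
    (Submodule.mkQ_surjective U').forall]
  simp only [Submodule.mkQ_apply, ← Submodule.Quotient.mk_smul, Submodule.Quotient.mk_eq_zero]

lemma mul_mem_quotAnn_left (a : A) {b : A} (hb : b ∈ quotAnn K U') : a * b ∈ quotAnn K U' :=
  Ideal.mul_mem_left _ a hb

lemma mul_mem_quotAnn_right {a : A} (b : A) (ha : a ∈ quotAnn K U') : a * b ∈ quotAnn K U' :=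
  Ideal.mul_mem_right b _ ha

end QuotAnn

section Operators

variable (K : Type*) {A : Type*} (U : Type*) [Field K] [Ring A] [Algebra K A]
  [AddCommGroup U] [Module K U] [Module A U] [IsScalarTower K A U]

/-- The action of an algebra on a module, as a linear map into the endomorphisms. -/
def actEnd : A →ₗ[K] End K U := (Algebra.lsmul K K U).toLinearMap

@[simp] lemma actEnd_apply (a : A) (u : U) : actEnd K U a u = a • u := rfl

/-- The dimension of the space of operators on `U` induced by `S`. The module `U` need not be
faithful, so this may be smaller than the dimension of `S`. -/
noncomputable def actRank (S : Submodule K A) : ℕ := finrank K (S.map (actEnd K U))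

/-- The span of all commutators of an algebra. -/
def commSpan (A : Type*) [Ring A] [Algebra K A] : Submodule K A :=
  Submodule.span K {x | ∃ a b : A, x = a * b - b * a}

variable {K}

lemma commutator_mem_commSpan (a b : A) : a * b - b * a ∈ commSpan K A :=
  Submodule.subset_span ⟨a, b, rfl⟩

variable {U} {U' : Submodule A U}

lemma ker_actEnd_quotient : LinearMap.ker (actEnd K (U ⧸ U') : A →ₗ[K] _) = quotAnn K U' := by
  ext a
  simp [quotAnn, LinearMap.ext_iff, Module.mem_annihilator]

lemma actRank_eq_add [FiniteDimensional K A] (U' : Submodule A U) (S : Submodule K A) :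
    actRank K U S = actRank K (U ⧸ U') S + actRank K U (S ⊓ quotAnn K U') := by
  rw [← ker_actEnd_quotient]
  refine finrank_map_eq_add_of_ker_le _ _ (fun a ha => ?_) S
  rw [ker_actEnd_quotient, mem_quotAnn]
  intro u
  rw [← actEnd_apply K, LinearMap.mem_ker.1 ha]
  exact U'.zero_mem

lemma actRank_le_of_le_sup_ker [FiniteDimensional K U] {S T R : Submodule K A}
    (h : S ≤ T ⊔ R ⊔ LinearMap.ker (actEnd K U)) :
    actRank K U S ≤ actRank K U T + actRank K U R := by
  have hker : (LinearMap.ker (actEnd K U : A →ₗ[K] End K U)).map (actEnd K U) = ⊥ := by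
    exact LinearMap.le_ker_iff_map.1 le_rfl
  have hmap := Submodule.map_mono (f := actEnd K U) h
  rw [Submodule.map_sup, Submodule.map_sup, hker, sup_bot_eq] at hmap
  exact (Submodule.finrank_mono hmap).trans (Submodule.finrank_add_le_finrank_add_finrank _ _)

end Operators

section RankOne

variable {K A U : Type*} [Field K] [Ring A] [Algebra K A] [AddCommGroup U] [Module K U]
  [Module A U] [IsScalarTower K A U] {U' : Submodule A U} {p : A} {u₀ : U'} {φ : U' →ₗ[K] K}

lemma mul_self_mul_smul_of_rank_one (hφ : φ u₀ = 1) (hp : ∀ u : U', p • u = φ u • u₀) {m : A}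
    (hm : m ∈ quotAnn K U') (u : U) : (p * (p * m)) • u = (p * m) • u := by
  have hpp (u : U') : p • p • u = p • u := by rw [hp u, smul_comm p (φ u) u₀, hp u₀, hφ, one_smul]
  simp only [mul_smul]
  exact congrArg Subtype.val (hpp ⟨m • u, mem_quotAnn.1 hm u⟩)

-- The identity of `U'` lies in `A p A`, because `A` induces all rank one operators `φ ⊗ v`.
lemma exists_sum_mul_rank_one_mul_smul_eq [IsAlgClosed K] [FiniteDimensional K U]
    [IsSimpleModule A U'] (hφ : φ u₀ = 1) (hp : ∀ u : U', p • u = φ u • u₀) :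
    ∃ (ι : Type) (_ : Fintype ι) (s t : ι → A), ∀ u : U', (∑ k, s k * (p * t k)) • u = u := by
  have : FiniteDimensional K U' := finiteDimensional_of_submodule U'
  let b := Module.finBasis K U'
  choose t ht using fun k =>
    exists_forall_smul_eq_of_isSimpleModule (A := A) ((b.coord k).smulRight u₀)
  choose s hs using fun k =>
    exists_forall_smul_eq_of_isSimpleModule (A := A) (φ.smulRight (b k))
  refine ⟨_, inferInstance, s, t, fun u => ?_⟩
  have hterm (k) : (s k * (p * t k)) • u = b.coord k u • b k := by
    rw [mul_smul, mul_smul, ht, LinearMap.smulRight_apply, smul_comm p, hp, hφ, one_smul,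
      smul_comm (s k), hs, LinearMap.smulRight_apply, hφ, one_smul]
  simp only [Finset.sum_smul, hterm, Basis.coord_apply, b.sum_repr]

-- Modulo commutators, `s p t n` becomes `p (t n s)`, and `p m` becomes `p m p`.
lemma quotAnn_le_commSpan_sup_corner [IsAlgClosed K] [FiniteDimensional K U]
    [IsSimpleModule A U'] (hφ : φ u₀ = 1) (hp : ∀ u : U', p • u = φ u • u₀) :
    quotAnn K U' ≤ (commSpan K A ⊓ quotAnn K U')
      ⊔ (quotAnn K U').map (LinearMap.mulLeftRight K (p, p)) ⊔ LinearMap.ker (actEnd K U) := by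
  set T := (commSpan K A ⊓ quotAnn K U')
    ⊔ (quotAnn K U').map (LinearMap.mulLeftRight K (p, p)) ⊔ LinearMap.ker (actEnd K U)
  have hcomm (a : A) {c : A} (hc : c ∈ quotAnn K U') : a * c - c * a ∈ T :=
    Submodule.mem_sup_left (Submodule.mem_sup_left ⟨commutator_mem_commSpan a c,
      sub_mem (mul_mem_quotAnn_left a hc) (mul_mem_quotAnn_right a hc)⟩)
  have hker {a : A} (ha : ∀ u : U, a • u = 0) : a ∈ T :=
    Submodule.mem_sup_right (LinearMap.mem_ker.2 (LinearMap.ext ha))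
  have hcorner {m : A} (hm : m ∈ quotAnn K U') : p * m * p ∈ T :=
    Submodule.mem_sup_left (Submodule.mem_sup_right ⟨m, hm, by simp⟩)
  have hp_mul {m : A} (hm : m ∈ quotAnn K U') : p * m ∈ T := by
    have hidem : p * m - p * (p * m) ∈ T := hker fun u => by
      rw [sub_smul, mul_self_mul_smul_of_rank_one hφ hp hm, sub_self]
    convert add_mem (add_mem hidem (hcomm p (mul_mem_quotAnn_left p hm))) (hcorner hm) using 1
    abel
  obtain ⟨ι, _, s, t, hst⟩ := exists_sum_mul_rank_one_mul_smul_eq hφ hp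
  intro n hn
  have hsub : n - (∑ k, s k * (p * t k)) * n ∈ T := hker fun u => by
    rw [sub_smul, mul_smul, sub_eq_zero]
    exact (congrArg Subtype.val (hst ⟨n • u, mem_quotAnn.1 hn u⟩)).symm
  have hsum : (∑ k, s k * (p * t k)) * n ∈ T := by
    rw [Finset.sum_mul]
    refine sum_mem fun k _ => ?_
    have htn : t k * n ∈ quotAnn K U' := mul_mem_quotAnn_left _ hn
    convert add_mem (hcomm (s k) (mul_mem_quotAnn_left p htn))
      (hp_mul (mul_mem_quotAnn_right (s k) htn)) using 1
    simp only [mul_assoc]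
    abel
  simpa using add_mem hsub hsum

end RankOne

/-! ### Peirce decompositions and the defect -/

section Peirce

variable (K : Type*) {A U : Type*} [Field K] [Ring A] [Algebra K A]

/-- The Peirce block `f A e` of an algebra; for idempotents `e` and `f` it consists of the
elements mapping the part `e U` of a module to `f U` and killing the complement of `e U`. -/
def peirceBlock (e f : A) : Submodule K A := LinearMap.range (LinearMap.mulLeftRight K (f, e))

variable [AddCommGroup U] [Module K U] [Module A U] [IsScalarTower K A U]

/-- The dimension of the image `e X` of a subspace `X` of an `A`-module under `e ∈ A`. -/
noncomputable def peirceDim (e : A) (X : Submodule K U) : ℕ := finrank K (X.map (actEnd K U e))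

variable {K}

lemma map_mkQ_map_actEnd_top (e : A) (U' : Submodule A U) :
    ((⊤ : Submodule K U).map (actEnd K U e)).map (U'.mkQ.restrictScalars K) =
      (⊤ : Submodule K (U ⧸ U')).map (actEnd K (U ⧸ U') e) := by
  ext x
  constructor
  · rintro ⟨_, ⟨y, -, rfl⟩, rfl⟩
    exact ⟨U'.mkQ y, trivial, by simp⟩
  · rintro ⟨y, -, rfl⟩
    obtain ⟨y, rfl⟩ := U'.mkQ_surjective y
    exact ⟨_, ⟨y, trivial, rfl⟩, by simp⟩

lemma map_actEnd_top_inf_ker_mkQ {e : A} (he : IsIdempotentElem e) (U' : Submodule A U) :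
    (⊤ : Submodule K U).map (actEnd K U e) ⊓ LinearMap.ker (U'.mkQ.restrictScalars K) =
      (U'.restrictScalars K).map (actEnd K U e) := by
  ext x
  constructor
  · rintro ⟨⟨y, -, rfl⟩, hy⟩
    have hy' : e • y ∈ U' := by simpa using hy
    refine ⟨e • y, hy', ?_⟩
    rw [actEnd_apply, actEnd_apply, smul_smul, he.eq]
  · rintro ⟨y, hy, rfl⟩
    exact ⟨⟨y, trivial, rfl⟩, by simpa using U'.smul_mem e hy⟩

variable [FiniteDimensional K U]

lemma peirceDim_mono (e : A) {X Y : Submodule K U} (h : X ≤ Y) :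
    peirceDim K e X ≤ peirceDim K e Y :=
  Submodule.finrank_mono (Submodule.map_mono h)

lemma peirceDim_top_eq_add {e : A} (he : IsIdempotentElem e) (U' : Submodule A U) :
    peirceDim K e (⊤ : Submodule K U) = peirceDim K e (U'.restrictScalars K)
      + peirceDim K e (⊤ : Submodule K (U ⧸ U')) := by
  have h := finrank_map_add_finrank_inf_ker (U'.mkQ.restrictScalars K)
    ((⊤ : Submodule K U).map (actEnd K U e))
  rw [map_mkQ_map_actEnd_top, map_actEnd_top_inf_ker_mkQ he] at h
  unfold peirceDim
  omega

lemma finrank_le_sum_peirceDim {V : Type*} [Fintype V] {e : V → A} (he : ∑ i, e i = 1)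
    (X : Submodule K U) : finrank K X ≤ ∑ i, peirceDim K (e i) X := by
  refine (Submodule.finrank_mono fun x hx => ?_).trans (finrank_iSup_le_sum _)
  rw [← one_smul A x, ← he, Finset.sum_smul]
  exact sum_mem fun i _ => Submodule.mem_iSup_of_mem i ⟨x, hx, rfl⟩

lemma finrank_ker_actEnd_sup_add_peirceDim_top (e : A) (X : Submodule K U) :
    finrank K (LinearMap.ker (actEnd K U e) ⊔ X : Submodule K U)
      + peirceDim K e (⊤ : Submodule K U) = finrank K U + peirceDim K e X := by
  have hX := finrank_map_add_finrank_inf_ker (actEnd K U e) X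
  have htop := finrank_map_add_finrank_inf_ker (actEnd K U e) ⊤
  have hsup := Submodule.finrank_sup_add_finrank_inf_eq (LinearMap.ker (actEnd K U e)) X
  rw [top_inf_eq, finrank_top] at htop
  rw [inf_comm] at hsup
  unfold peirceDim
  omega

lemma actRank_peirceBlock_inf_quotAnn_le {e f : A} (hf : IsIdempotentElem f)
    (U' : Submodule A U) (X : Submodule K U) (hX : ∀ a ∈ quotAnn K U', ∀ x ∈ X, a • x = 0) :
    (actRank K U (peirceBlock K e f ⊓ quotAnn K U') : ℤ) ≤
      peirceDim K f (U'.restrictScalars K) *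
        (peirceDim K e (⊤ : Submodule K U) - peirceDim K e X) := by
  have hbound := finrank_le_of_range_le_of_le_ker
    ((peirceBlock K e f ⊓ quotAnn K U').map (actEnd K U))
    ((U'.restrictScalars K).map (actEnd K U f)) (LinearMap.ker (actEnd K U e) ⊔ X) ?_ ?_
  · have hsup := finrank_ker_actEnd_sup_add_peirceDim_top e X
    have hmono := peirceDim_mono e (le_top : X ≤ ⊤)
    rw [show finrank K U - finrank K (LinearMap.ker (actEnd K U e) ⊔ X : Submodule K U)
      = peirceDim K e (⊤ : Submodule K U) - peirceDim K e X by omega] at hbound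
    rw [← Nat.cast_sub hmono]
    exact_mod_cast hbound
  · rintro _ ⟨a, ⟨⟨b, rfl⟩, ha⟩, rfl⟩ _ ⟨u, rfl⟩
    refine ⟨_, mem_quotAnn.1 ha u, ?_⟩
    simp [smul_smul, ← mul_assoc, hf.eq]
  · rintro _ ⟨a, ⟨⟨b, rfl⟩, ha⟩, rfl⟩
    refine sup_le (fun u hu => ?_) (fun u hu => hX _ ha _ hu)
    have hu' : e • u = 0 := hu
    simp [mul_smul, hu']

end Peirce

section WeightForm

variable {V : Type*} [Fintype V]

/-- The bilinear form with coefficients `w`, on dimension vectors. -/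
def weightForm (w : V → V → ℕ) (u v : V → ℕ) : ℤ := ∑ i, ∑ j, (w i j : ℤ) * (u i * v j)

lemma weightForm_comm {w : V → V → ℕ} (hw : ∀ i j, w i j = w j i) (u v : V → ℕ) :
    weightForm w u v = weightForm w v u := by
  rw [weightForm, Finset.sum_comm]
  refine Finset.sum_congr rfl fun i _ => Finset.sum_congr rfl fun j _ => ?_
  rw [hw j i, mul_comm (u j : ℤ)]

lemma sum_mul_sum_le_weightForm {w : V → V → ℕ} (hw : ∀ i j, 1 ≤ w i j) (u v : V → ℕ) :
    ((∑ i, u i : ℕ) : ℤ) * (∑ i, v i : ℕ) ≤ weightForm w u v := by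
  push_cast
  rw [Finset.sum_mul_sum]
  refine Finset.sum_le_sum fun i _ => Finset.sum_le_sum fun j _ => ?_
  exact le_mul_of_one_le_left (by positivity) (by exact_mod_cast hw i j)

lemma mul_le_weightForm (w : V → V → ℕ) (u v : V → ℕ) (i j : V) :
    (w i j : ℤ) * (u i * v j) ≤ weightForm w u v := by
  refine le_trans ?_ (Finset.single_le_sum (f := fun i => ∑ j, (w i j : ℤ) * (u i * v j))
    (fun i _ => Finset.sum_nonneg fun j _ => by positivity) (Finset.mem_univ i))
  exact Finset.single_le_sum (f := fun j => (w i j : ℤ) * (u i * v j))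
    (fun j _ => by positivity) (Finset.mem_univ j)

lemma weightForm_nonneg (w : V → V → ℕ) (u v : V → ℕ) : 0 ≤ weightForm w u v :=
  Finset.sum_nonneg fun i _ => Finset.sum_nonneg fun j _ => by positivity

lemma weightForm_mono_right (w : V → V → ℕ) (u : V → ℕ) {v v' : V → ℕ} (h : v ≤ v') :
    weightForm w u v ≤ weightForm w u v' := by
  refine Finset.sum_le_sum fun i _ => Finset.sum_le_sum fun j _ => ?_
  have := h i
  have := h j
  gcongr

end WeightForm

section Defect

variable (K : Type*) {A : Type*} (U : Type*) {V : Type*} [Fintype V] [Field K] [Ring A]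
  [Algebra K A] [AddCommGroup U] [Module K U] [Module A U] [IsScalarTower K A U]

/-- The Peirce defect `∑ w i j (u i * u j - dim (e j A e i)) - 2 (dim A - dim [A, A])`, where
`u i = dim (e i U)` and the subspaces of `A` are measured by their action on `U`. -/
noncomputable def peirceDefect (w : V → V → ℕ) (e : V → A) : ℤ :=
  ∑ i, ∑ j, (w i j : ℤ) * ((peirceDim K (e i) (⊤ : Submodule K U) : ℤ) *
      peirceDim K (e j) (⊤ : Submodule K U) - actRank K U (peirceBlock K (e i) (e j)))
    - 2 * ((actRank K U (⊤ : Submodule K A) : ℤ) - actRank K U (commSpan K A))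

variable {K U} [FiniteDimensional K U] [FiniteDimensional K A]

lemma peirceBlock_codim_add_le {e f : A} (he : IsIdempotentElem e) (hf : IsIdempotentElem f)
    (U' : Submodule A U) (X : Submodule K U) (hX : ∀ a ∈ quotAnn K U', ∀ x ∈ X, a • x = 0) :
    ((peirceDim K e (⊤ : Submodule K (U ⧸ U')) : ℤ) * peirceDim K f (⊤ : Submodule K (U ⧸ U'))
        - actRank K (U ⧸ U') (peirceBlock K e f))
      + peirceDim K e (U'.restrictScalars K) * peirceDim K f (⊤ : Submodule K (U ⧸ U'))
      + peirceDim K e X * peirceDim K f (U'.restrictScalars K)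
    ≤ (peirceDim K e (⊤ : Submodule K U) : ℤ) * peirceDim K f (⊤ : Submodule K U)
        - actRank K U (peirceBlock K e f) := by
  have hblock := actRank_peirceBlock_inf_quotAnn_le (e := e) hf U' X hX
  rw [peirceDim_top_eq_add he U'] at hblock ⊢
  rw [peirceDim_top_eq_add hf U', actRank_eq_add U' (peirceBlock K e f)]
  push_cast at hblock ⊢
  linarith

lemma peirceDefect_quotient_add_le {w : V → V → ℕ} (hw : ∀ i j, w i j = w j i) {e : V → A}
    (he : ∀ i, IsIdempotentElem (e i)) (U' : Submodule A U) (X : Submodule K U)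
    (hX : ∀ a ∈ quotAnn K U', ∀ x ∈ X, a • x = 0) {k : ℕ}
    (hk : actRank K U (quotAnn K U') ≤ actRank K U (commSpan K A ⊓ quotAnn K U') + k) :
    peirceDefect K (U ⧸ U') w e
      + weightForm w (fun i => peirceDim K (e i) (U'.restrictScalars K))
          (fun i => peirceDim K (e i) (⊤ : Submodule K (U ⧸ U')))
      + weightForm w (fun i => peirceDim K (e i) (U'.restrictScalars K))
          (fun i => peirceDim K (e i) X) - 2 * k ≤ peirceDefect K U w e := by
  have htop := actRank_eq_add U' (⊤ : Submodule K A)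
  have hcomm := actRank_eq_add U' (commSpan K A)
  rw [top_inf_eq] at htop
  have hblocks := Finset.sum_le_sum fun i (_ : i ∈ Finset.univ) =>
    Finset.sum_le_sum fun j (_ : j ∈ Finset.univ) => mul_le_mul_of_nonneg_left
      (peirceBlock_codim_add_le (he i) (he j) U' X hX) (Nat.cast_nonneg (w i j))
  simp only [mul_add, Finset.sum_add_distrib] at hblocks
  rw [weightForm_comm hw _ fun i => peirceDim K (e i) X]
  unfold peirceDefect weightForm
  zify at htop hcomm hk
  linarith

end Defect

/-! ### Rank one elements of the annihilator of a quotient -/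

section RankOneElements

variable {K A U : Type*} [Field K] [IsAlgClosed K] [Ring A] [Algebra K A]
  [AddCommGroup U] [Module K U] [Module A U] [IsScalarTower K A U] [FiniteDimensional K U]
  {U' : Submodule A U} [IsSimpleModule A U']

lemma exists_rank_one_mem_quotAnn (h : ¬ ∀ a ∈ quotAnn K U', ∀ u ∈ U', a • u = 0) :
    ∃ p ∈ quotAnn K U', ∃ (u₀ : U') (φ : U' →ₗ[K] K), φ u₀ = 1 ∧
      (∀ u : U', p • u = φ u • u₀) ∧ ∀ u : U, ∃ c : K, p • u = c • (u₀ : U) := by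
  push Not at h
  obtain ⟨n, hn, u₁, hu₁, hne⟩ := h
  have : FiniteDimensional K U' := finiteDimensional_of_submodule U'
  let u₀ : U' := n • ⟨u₁, hu₁⟩
  obtain ⟨φ, hφ⟩ := Projective.exists_dual_eq_one K (x := u₀) fun h => hne (congrArg Subtype.val h)
  obtain ⟨s, hs⟩ := exists_forall_smul_eq_of_isSimpleModule (A := A)
    (φ.smulRight (⟨u₁, hu₁⟩ : U'))
  obtain ⟨t, ht⟩ := exists_forall_smul_eq_of_isSimpleModule (A := A) (φ.smulRight u₀)
  refine ⟨t * (n * s), mul_mem_quotAnn_left _ (mul_mem_quotAnn_right _ hn), u₀, φ, hφ,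
    fun u => ?_, fun u => ⟨φ ⟨n • s • u, mem_quotAnn.1 hn _⟩, ?_⟩⟩
  · rw [mul_smul, mul_smul, hs, LinearMap.smulRight_apply, smul_comm n, smul_comm t, ht,
      LinearMap.smulRight_apply, hφ, one_smul]
  · rw [mul_smul, mul_smul]
    exact congrArg Subtype.val (ht ⟨n • s • u, mem_quotAnn.1 hn _⟩)

lemma actRank_quotAnn_le_add_one (h : ¬ ∀ a ∈ quotAnn K U', ∀ u ∈ U', a • u = 0) :
    actRank K U (quotAnn K U') ≤ actRank K U (commSpan K A ⊓ quotAnn K U') + 1 := by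
  obtain ⟨p, -, u₀, φ, hφ, hp, hrank⟩ := exists_rank_one_mem_quotAnn h
  refine (actRank_le_of_le_sup_ker (quotAnn_le_commSpan_sup_corner hφ hp)).trans
    (Nat.add_le_add_left ?_ _)
  have hle : ((quotAnn K U').map (LinearMap.mulLeftRight K (p, p))).map (actEnd K U) ≤
      Submodule.span K {actEnd K U p} := by
    rintro _ ⟨_, ⟨m, hm, rfl⟩, rfl⟩
    refine Submodule.mem_span_singleton.2 ⟨φ ⟨m • (u₀ : U), mem_quotAnn.1 hm _⟩, ?_⟩
    ext u
    obtain ⟨c, hc⟩ := hrank u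
    have hpm : p • m • (u₀ : U) = φ ⟨m • (u₀ : U), mem_quotAnn.1 hm _⟩ • (u₀ : U) :=
      congrArg Subtype.val (hp ⟨m • (u₀ : U), mem_quotAnn.1 hm _⟩)
    simp only [LinearMap.smul_apply, actEnd_apply, LinearMap.mulLeftRight_apply, mul_smul, hc]
    rw [smul_comm m c, smul_comm p c, hpm, smul_comm]
  exact (Submodule.finrank_mono hle).trans (finrank_span_singleton_le_one _)

omit [IsAlgClosed K] [IsSimpleModule A U'] in
lemma actRank_map_mulLeftRight_le_peirceDim {e : A} (he : IsIdempotentElem e)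
    (h : ∀ a ∈ quotAnn K U', ∀ u ∈ U', a • u = 0) {p : A} {u₀ : U'} {φ : U' →ₗ[K] K}
    (hp : ∀ u : U', (e * p * e) • u = φ u • u₀) :
    actRank K U ((quotAnn K U').map (LinearMap.mulLeftRight K (e * p * e, e * p * e)))
      ≤ peirceDim K e (⊤ : Submodule K (U ⧸ U')) := by
  have hbound := finrank_le_of_range_le_of_le_ker
    (((quotAnn K U').map (LinearMap.mulLeftRight K (e * p * e, e * p * e))).map (actEnd K U))
    (Submodule.span K {(u₀ : U)}) (LinearMap.ker (actEnd K U e) ⊔ U'.restrictScalars K) ?_ ?_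
  · have hsup := finrank_ker_actEnd_sup_add_peirceDim_top e (U'.restrictScalars K)
    have htop := peirceDim_top_eq_add (K := K) he U'
    refine hbound.trans ((Nat.mul_le_mul_right _ (finrank_span_singleton_le_one _)).trans ?_)
    omega
  · rintro _ ⟨_, ⟨m, hm, rfl⟩, rfl⟩ _ ⟨u, rfl⟩
    refine Submodule.mem_span_singleton.2 ⟨φ ⟨m • (e * p * e) • u, mem_quotAnn.1 hm _⟩, ?_⟩
    have := congrArg Subtype.val (hp ⟨m • (e * p * e) • u, mem_quotAnn.1 hm _⟩)
    simpa [mul_smul] using this.symm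
  · rintro _ ⟨_, ⟨m, hm, rfl⟩, rfl⟩
    refine sup_le (fun u hu => ?_) (fun u hu => ?_)
    · have hu' : e • u = 0 := hu
      simp [mul_smul, hu']
    · rw [LinearMap.mulLeftRight_apply, LinearMap.mem_ker, actEnd_apply, mul_smul, mul_smul,
        h m hm _ (U'.smul_mem _ hu), smul_zero]

lemma exists_actRank_quotAnn_le_add_peirceDim {V : Type*} [Fintype V] {e : V → A}
    (he : ∀ i, IsIdempotentElem (e i)) (hsum : ∑ i, e i = 1)
    (h : ∀ a ∈ quotAnn K U', ∀ u ∈ U', a • u = 0) :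
    ∃ i, 0 < peirceDim K (e i) (U'.restrictScalars K) ∧
      actRank K U (quotAnn K U') ≤ actRank K U (commSpan K A ⊓ quotAnn K U')
        + peirceDim K (e i) (⊤ : Submodule K (U ⧸ U')) := by
  have : FiniteDimensional K U' := finiteDimensional_of_submodule U'
  have := IsSimpleModule.nontrivial A U'
  obtain ⟨v, hv⟩ := exists_ne (0 : U')
  obtain ⟨i, hi⟩ : ∃ i, e i • v ≠ 0 := by
    by_contra! hzero
    exact hv (by
      rw [← one_smul A v, ← hsum, Finset.sum_smul, Finset.sum_eq_zero fun i _ => hzero i])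
  obtain ⟨φ₀, hφ₀⟩ := Projective.exists_dual_eq_one K hi
  have hfix : e i • e i • v = e i • v := by rw [smul_smul, (he i).eq]
  let φ : U' →ₗ[K] K := φ₀.comp (actEnd K U' (e i))
  obtain ⟨p, hp⟩ := exists_forall_smul_eq_of_isSimpleModule (A := A) (φ.smulRight (e i • v))
  have hp' (u : U') : (e i * p * e i) • u = φ u • e i • v := by
    rw [mul_smul, mul_smul, hp, LinearMap.smulRight_apply, smul_comm (e i) (φ _), hfix]
    simp [φ, smul_smul, (he i).eq]
  refine ⟨i, Submodule.one_le_finrank_iff.2 fun hbot => hi ?_, (actRank_le_of_le_sup_ker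
    (quotAnn_le_commSpan_sup_corner (by simp [φ, hfix, hφ₀]) hp')).trans
    (Nat.add_le_add_left (actRank_map_mulLeftRight_le_peirceDim (he i) h hp') _)⟩
  have hmem : ((e i • v : U') : U) ∈ (U'.restrictScalars K).map (actEnd K U (e i)) :=
    ⟨v, v.2, rfl⟩
  rw [hbot] at hmem
  exact Subtype.ext hmem

-- The rank one operator `p` commutes with `z`, so its image is an eigenline of `z`.
lemma exists_forall_mem_apply_eq_smul (h : ¬ ∀ a ∈ quotAnn K U', ∀ u ∈ U', a • u = 0)
    (z : U →ₗ[A] U) : ∃ c : K, ∀ u ∈ U', z u = c • u := by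
  obtain ⟨p, -, u₀, φ, hφ, hp, hrank⟩ := exists_rank_one_mem_quotAnn h
  have : FiniteDimensional K U' := finiteDimensional_of_submodule U'
  have hpu₀ : p • (u₀ : U) = u₀ := congrArg Subtype.val ((hp u₀).trans (by rw [hφ, one_smul]))
  obtain ⟨c, hc⟩ := hrank (z u₀)
  rw [← map_smul, hpu₀] at hc
  refine ⟨c, fun u hu => ?_⟩
  obtain ⟨a, ha⟩ := exists_forall_smul_eq_of_isSimpleModule (A := A) (φ.smulRight (⟨u, hu⟩ : U'))
  have hau : a • (u₀ : U) = u := by simpa [hφ] using congrArg Subtype.val (ha u₀)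
  rw [← hau, map_smul, hc, smul_comm]

end RankOneElements

/-! ### Lower bounds for the Peirce defect -/

section TotallyNegativeWeight

variable {V : Type*} [Fintype V]

/-- The properties that the coefficients `w i j` of the symmetrised Euler form, with the sign
reversed, have for a totally negative quiver. -/
structure IsTotallyNegativeWeight (w : V → V → ℕ) : Prop where
  symm : ∀ i j, w i j = w j i
  two_le_diag : ∀ i, 2 ≤ w i i
  one_le : ∀ i j, 1 ≤ w i j

/-- The dimension vectors that property (P) excludes: the sum of two unit vectors at distinct
vertices joined with weight one. -/
def IsExceptional [DecidableEq V] (w : V → V → ℕ) (u : V → ℕ) : Prop :=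
  ∃ i j, i ≠ j ∧ w i j = 1 ∧ u = Pi.single i 1 + Pi.single j 1

variable {w : V → V → ℕ}

lemma exists_eq_single_of_sum_eq_one [DecidableEq V] {u : V → ℕ} (hu : ∑ i, u i = 1) :
    ∃ i, u = Pi.single i 1 := by
  obtain ⟨i, -, hi⟩ := Finset.exists_ne_zero_of_sum_ne_zero (hu.trans_ne one_ne_zero)
  have hle : ∀ j ∈ Finset.univ, (Pi.single i 1 : V → ℕ) j ≤ u j := fun j _ =>
    update_le_iff.2 ⟨Nat.one_le_iff_ne_zero.2 hi, fun _ _ => Nat.zero_le _⟩ j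
  have hsum := (Finset.sum_eq_sum_iff_of_le hle).1 (by simp [hu])
  exact ⟨i, funext fun j => (hsum j (Finset.mem_univ j)).symm⟩

lemma IsTotallyNegativeWeight.isExceptional_add [DecidableEq V] (hw : IsTotallyNegativeWeight w)
    {u v : V → ℕ} (hu : 0 < ∑ i, u i) (hv : 0 < ∑ i, v i) (h : weightForm w u v < 2) :
    IsExceptional w (u + v) := by
  have hlt : (∑ i, u i) * ∑ i, v i < 2 := by
    exact_mod_cast (sum_mul_sum_le_weightForm hw.one_le u v).trans_lt h
  obtain ⟨i, rfl⟩ := exists_eq_single_of_sum_eq_one (u := u) (by nlinarith)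
  obtain ⟨j, rfl⟩ := exists_eq_single_of_sum_eq_one (u := v) (by nlinarith)
  have hij : w i j < 2 := by
    have := (mul_le_weightForm w (Pi.single i 1) (Pi.single j 1) i j).trans_lt h
    simp only [Pi.single_eq_same, Nat.cast_one, mul_one] at this
    exact_mod_cast this
  refine ⟨i, j, ?_, le_antisymm (Nat.lt_succ_iff.1 hij) (hw.one_le i j), rfl⟩
  rintro rfl
  exact (hw.two_le_diag i).not_gt hij

lemma IsTotallyNegativeWeight.two_mul_le_weightForm (hw : IsTotallyNegativeWeight w) {u : V → ℕ}
    (v : V → ℕ) {i : V} (hi : 0 < u i) : 2 * (v i : ℤ) ≤ weightForm w u v := by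
  refine le_trans ?_ (mul_le_weightForm w u v i i)
  have hwi : 2 ≤ w i i := hw.two_le_diag i
  rw [← mul_assoc]
  gcongr
  exact_mod_cast Nat.mul_le_mul hwi hi

end TotallyNegativeWeight

section Bounds

universe u

variable {K A V : Type*} {U : Type u} [Field K] [Ring A] [Algebra K A] [Fintype V]
  [AddCommGroup U] [Module K U] [Module A U] [IsScalarTower K A U] [FiniteDimensional K U]
  {w : V → V → ℕ} {e : V → A}

omit [FiniteDimensional K U] in
lemma peirceDefect_of_subsingleton [Subsingleton U] : peirceDefect K U w e = 0 := by
  have hactRank (S : Submodule K A) : actRank K U S = 0 := Module.finrank_zero_of_subsingleton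
  have hpeirceDim (a : A) (X : Submodule K U) : peirceDim K a X = 0 :=
    Module.finrank_zero_of_subsingleton
  simp [peirceDefect, hactRank, hpeirceDim]

lemma finrank_mul_finrank_le_weightForm {U₂ : Type*} [AddCommGroup U₂] [Module K U₂] [Module A U₂]
    [IsScalarTower K A U₂] [FiniteDimensional K U₂] (hw : IsTotallyNegativeWeight w)
    (hsum : ∑ i, e i = 1) (X : Submodule K U) (Y : Submodule K U₂) :
    (finrank K X : ℤ) * finrank K Y ≤
      weightForm w (fun i => peirceDim K (e i) X) (fun i => peirceDim K (e i) Y) := by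
  refine le_trans ?_ (sum_mul_sum_le_weightForm hw.one_le _ _)
  exact_mod_cast Nat.mul_le_mul (finrank_le_sum_peirceDim hsum X) (finrank_le_sum_peirceDim hsum Y)

lemma finrank_le_weightForm_of_isSimpleModule {U₂ : Type*} [AddCommGroup U₂] [Module K U₂]
    [Module A U₂] [IsScalarTower K A U₂] [FiniteDimensional K U₂] (hw : IsTotallyNegativeWeight w)
    (hsum : ∑ i, e i = 1) (U' : Submodule A U) [IsSimpleModule A U'] (Y : Submodule K U₂) :
    (finrank K Y : ℤ) ≤ weightForm w (fun i => peirceDim K (e i) (U'.restrictScalars K))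
      (fun i => peirceDim K (e i) Y) := by
  refine le_trans ?_ (finrank_mul_finrank_le_weightForm hw hsum _ Y)
  exact le_mul_of_one_le_left (by positivity)
    (by exact_mod_cast finrank_restrictScalars_pos_of_isSimpleModule U')

lemma peirceDim_quotient_le_peirceDim_range {U' : Submodule A U} {y : U →ₗ[A] U} {c : K}
    (hc : c ≠ 0) (hyc : ∀ u, y u - c • u ∈ U') (a : A) :
    peirceDim K a (⊤ : Submodule K (U ⧸ U')) ≤
      peirceDim K a ((LinearMap.range y).restrictScalars K) := by
  have hle : (⊤ : Submodule K (U ⧸ U')).map (actEnd K (U ⧸ U') a) ≤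
      (((LinearMap.range y).restrictScalars K).map (actEnd K U a)).map
        (U'.mkQ.restrictScalars K) := by
    rintro _ ⟨v, -, rfl⟩
    obtain ⟨u, rfl⟩ := U'.mkQ_surjective v
    have hu : U'.mkQ (y (c⁻¹ • u)) = U'.mkQ u := by
      have := hyc (c⁻¹ • u)
      rw [smul_inv_smul₀ hc] at this
      exact (Submodule.Quotient.eq U').2 this
    exact ⟨a • y (c⁻¹ • u), ⟨y (c⁻¹ • u), ⟨_, rfl⟩, rfl⟩, by
      rw [actEnd_apply, LinearMap.restrictScalars_apply, map_smul, hu]⟩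
  exact (Submodule.finrank_mono hle).trans (Submodule.finrank_map_le _ _)

variable [IsAlgClosed K] [FiniteDimensional K A]

section SimpleSubmodule

variable (hw : IsTotallyNegativeWeight w) (he : ∀ i, IsIdempotentElem (e i))
  (hsum : ∑ i, e i = 1) {U' : Submodule A U} [IsSimpleModule A U']

include hw he hsum

lemma peirceDefect_quotient_add_two_le (h : ∀ a ∈ quotAnn K U', ∀ u ∈ U', a • u = 0) :
    peirceDefect K (U ⧸ U') w e + 2 ≤ peirceDefect K U w e := by
  obtain ⟨i, hi, hk⟩ := exists_actRank_quotAnn_le_add_peirceDim he hsum h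
  have hdefect := peirceDefect_quotient_add_le hw.symm he U' (U'.restrictScalars K) h hk
  have hquot := hw.two_mul_le_weightForm (u := fun i => peirceDim K (e i) (U'.restrictScalars K))
    (fun i => peirceDim K (e i) (⊤ : Submodule K (U ⧸ U'))) hi
  have hsub := hw.two_mul_le_weightForm (u := fun i => peirceDim K (e i) (U'.restrictScalars K))
    (fun i => peirceDim K (e i) (U'.restrictScalars K)) hi
  have hone : (1 : ℤ) ≤ peirceDim K (e i) (U'.restrictScalars K) := by exact_mod_cast hi
  linarith [hone]

omit hsum in
lemma peirceDefect_quotient_add_weightForm_range_le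
    (h : ¬ ∀ a ∈ quotAnn K U', ∀ u ∈ U', a • u = 0) {y : U →ₗ[A] U} (hy : ∀ u ∈ U', y u = 0) :
    peirceDefect K (U ⧸ U') w e
      + weightForm w (fun i => peirceDim K (e i) (U'.restrictScalars K))
          (fun i => peirceDim K (e i) (⊤ : Submodule K (U ⧸ U')))
      + weightForm w (fun i => peirceDim K (e i) (U'.restrictScalars K))
          (fun i => peirceDim K (e i) ((LinearMap.range y).restrictScalars K)) - 2
      ≤ peirceDefect K U w e := by
  refine peirceDefect_quotient_add_le hw.symm he U' _ ?_ (actRank_quotAnn_le_add_one h)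
  rintro a ha _ ⟨u, rfl⟩
  rw [← map_smul]
  exact hy _ (mem_quotAnn.1 ha u)

lemma peirceDefect_quotient_add_finrank_le (h : ¬ ∀ a ∈ quotAnn K U', ∀ u ∈ U', a • u = 0) :
    peirceDefect K (U ⧸ U') w e + finrank K (U ⧸ U') - 2 ≤ peirceDefect K U w e := by
  have hdefect := peirceDefect_quotient_add_weightForm_range_le hw he h (y := 0) fun _ _ => rfl
  have hquot := finrank_le_weightForm_of_isSimpleModule hw hsum U' (⊤ : Submodule K (U ⧸ U'))
  have hrange := weightForm_nonneg w (fun i => peirceDim K (e i) (U'.restrictScalars K))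
    (fun i => peirceDim K (e i) ((LinearMap.range (0 : U →ₗ[A] U)).restrictScalars K))
  rw [finrank_top] at hquot
  linarith

end SimpleSubmodule

lemma neg_one_le_peirceDefect_add_finrank (hw : IsTotallyNegativeWeight w)
    (he : ∀ i, IsIdempotentElem (e i)) (hsum : ∑ i, e i = 1) :
    -1 ≤ peirceDefect K U w e + finrank K U := by
  induction hn : finrank K U using Nat.strong_induction_on generalizing U with
  | _ n ih =>
  cases subsingleton_or_nontrivial U with
  | inl _ => rw [peirceDefect_of_subsingleton]; omega
  | inr _ =>
  have : IsArtinian A U := isArtinian_of_tower K inferInstance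
  obtain ⟨U', _⟩ := exists_isSimpleModule_submodule (A := A) (U := U)
  have hpos := finrank_restrictScalars_pos_of_isSimpleModule (K := K) U'
  have hadd := finrank_eq_finrank_add_finrank_quotient (K := K) U'
  have hquot := ih (finrank K (U ⧸ U')) (by omega) rfl
  by_cases h : ∀ a ∈ quotAnn K U', ∀ u ∈ U', a • u = 0
  · have := peirceDefect_quotient_add_two_le hw he hsum h
    omega
  · have hle := peirceDefect_quotient_add_finrank_le hw he hsum h
    by_cases hone : n = 1
    · have : Subsingleton (U ⧸ U') := (Module.finrank_zero_iff (R := K)).1 (by omega)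
      rw [peirceDefect_of_subsingleton] at hle
      omega
    · omega

lemma neg_three_le_peirceDefect (hw : IsTotallyNegativeWeight w)
    (he : ∀ i, IsIdempotentElem (e i)) (hsum : ∑ i, e i = 1) : -3 ≤ peirceDefect K U w e := by
  induction hn : finrank K U using Nat.strong_induction_on generalizing U with
  | _ n ih =>
  cases subsingleton_or_nontrivial U with
  | inl _ => rw [peirceDefect_of_subsingleton]; omega
  | inr _ =>
  have : IsArtinian A U := isArtinian_of_tower K inferInstance
  obtain ⟨U', _⟩ := exists_isSimpleModule_submodule (A := A) (U := U)
  by_cases h : ∀ a ∈ quotAnn K U', ∀ u ∈ U', a • u = 0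
  · have hpos := finrank_restrictScalars_pos_of_isSimpleModule (K := K) U'
    have hadd := finrank_eq_finrank_add_finrank_quotient (K := K) U'
    have hquot := ih (finrank K (U ⧸ U')) (by omega) rfl
    have := peirceDefect_quotient_add_two_le hw he hsum h
    omega
  · have hquot := neg_one_le_peirceDefect_add_finrank (K := K) (U := U ⧸ U') hw he hsum
    have := peirceDefect_quotient_add_finrank_le hw he hsum h
    omega

section Endomorphism

variable (hw : IsTotallyNegativeWeight w) (he : ∀ i, IsIdempotentElem (e i))
  (hsum : ∑ i, e i = 1) {U' : Submodule A U} [IsSimpleModule A U'] {y : U →ₗ[A] U}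

include hw he hsum

lemma neg_one_le_peirceDefect_of_le_quotient (h : ¬ ∀ a ∈ quotAnn K U', ∀ u ∈ U', a • u = 0)
    (hy : ∀ u ∈ U', y u = 0) (hy0 : y ≠ 0) (hquot : -2 ≤ peirceDefect K (U ⧸ U') w e)
    (hrank : 2 ≤ finrank K (U ⧸ U')) : -1 ≤ peirceDefect K U w e := by
  have hdefect := peirceDefect_quotient_add_weightForm_range_le hw he h hy
  have htop := finrank_le_weightForm_of_isSimpleModule hw hsum U' (⊤ : Submodule K (U ⧸ U'))
  have hrange := finrank_le_weightForm_of_isSimpleModule hw hsum U'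
    ((LinearMap.range y).restrictScalars K)
  have hpos : 0 < finrank K ((LinearMap.range y).restrictScalars K) :=
    Submodule.one_le_finrank_iff.2 (by simpa [LinearMap.range_eq_bot] using hy0)
  rw [finrank_top] at htop
  omega

lemma neg_one_le_peirceDefect_quotient_add_weightForm :
    -1 ≤ peirceDefect K (U ⧸ U') w e +
      weightForm w (fun i => peirceDim K (e i) (U'.restrictScalars K))
        (fun i => peirceDim K (e i) (⊤ : Submodule K (U ⧸ U'))) := by
  have hquot := neg_one_le_peirceDefect_add_finrank (K := K) (U := U ⧸ U') hw he hsum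
  have htop := finrank_le_weightForm_of_isSimpleModule hw hsum U' (⊤ : Submodule K (U ⧸ U'))
  rw [finrank_top] at htop
  omega

lemma neg_one_le_peirceDefect_of_range_le (h : ¬ ∀ a ∈ quotAnn K U', ∀ u ∈ U', a • u = 0)
    (hy : ∀ u ∈ U', y u = 0) (hy0 : y ≠ 0) (hrange : LinearMap.range y ≤ U') :
    -1 ≤ peirceDefect K U w e := by
  have hdefect := peirceDefect_quotient_add_weightForm_range_le hw he h hy
  have hquot := neg_one_le_peirceDefect_quotient_add_weightForm (K := K) (U' := U') hw he hsum
  have heq : LinearMap.range y = U' :=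
    ((isSimpleModule_iff_isAtom.1 inferInstance).le_iff_eq
      (mt LinearMap.range_eq_bot.1 hy0)).1 hrange
  obtain ⟨i, -, hi⟩ := Finset.exists_ne_zero_of_sum_ne_zero
    ((finrank_restrictScalars_pos_of_isSimpleModule (K := K) U').trans_le
      (finrank_le_sum_peirceDim hsum _)).ne'
  have hdiag := hw.two_mul_le_weightForm (u := fun i => peirceDim K (e i) (U'.restrictScalars K))
    (fun i => peirceDim K (e i) (U'.restrictScalars K)) (Nat.pos_of_ne_zero hi)
  rw [heq] at hdefect
  omega

lemma neg_two_le_peirceDefect_of_sub_smul_mem [DecidableEq V]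
    (h : ¬ ∀ a ∈ quotAnn K U', ∀ u ∈ U', a • u = 0) (hy : ∀ u ∈ U', y u = 0) (hy0 : y ≠ 0)
    {c : K} (hc : c ≠ 0) (hyc : ∀ u, y u - c • u ∈ U') :
    -2 ≤ peirceDefect K U w e ∧ (-1 ≤ peirceDefect K U w e ∨
      IsExceptional w fun i => peirceDim K (e i) (⊤ : Submodule K U)) := by
  have hdefect := peirceDefect_quotient_add_weightForm_range_le hw he h hy
  have hquot := neg_one_le_peirceDefect_quotient_add_weightForm (K := K) (U' := U') hw he hsum
  have hmono := weightForm_mono_right w (fun i => peirceDim K (e i) (U'.restrictScalars K))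
    fun i => peirceDim_quotient_le_peirceDim_range hc hyc (e i)
  have hpos : 0 < finrank K (⊤ : Submodule K (U ⧸ U')) := by
    refine Submodule.one_le_finrank_iff.2 fun hbot => hy0 (LinearMap.ext fun u => hy u ?_)
    have hu : U'.mkQ u ∈ (⊤ : Submodule K (U ⧸ U')) := Submodule.mem_top
    rwa [hbot, Submodule.mem_bot, Submodule.mkQ_apply, Submodule.Quotient.mk_eq_zero] at hu
  have hone := finrank_le_weightForm_of_isSimpleModule hw hsum U' (⊤ : Submodule K (U ⧸ U'))
  refine ⟨by omega, or_iff_not_imp_left.2 fun hlt => ?_⟩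
  rw [funext fun i => peirceDim_top_eq_add (K := K) (he i) U']
  exact hw.isExceptional_add
    ((finrank_restrictScalars_pos_of_isSimpleModule U').trans_le (finrank_le_sum_peirceDim hsum _))
    (hpos.trans_le (finrank_le_sum_peirceDim hsum _)) (by omega)

end Endomorphism

-- Split off a simple submodule `U'`: after subtracting a scalar the endomorphism vanishes on `U'`,
-- and on `U ⧸ U'` it is then either not a scalar, or zero, or a nonzero scalar.
lemma neg_two_le_peirceDefect_of_end [DecidableEq V] (hw : IsTotallyNegativeWeight w)
    (he : ∀ i, IsIdempotentElem (e i)) (hsum : ∑ i, e i = 1) (z : U →ₗ[A] U)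
    (hz : ¬ ∃ c : K, ∀ u, z u = c • u) :
    -2 ≤ peirceDefect K U w e ∧ (-1 ≤ peirceDefect K U w e ∨
      IsExceptional w fun i => peirceDim K (e i) (⊤ : Submodule K U)) := by
  induction hn : finrank K U using Nat.strong_induction_on generalizing U with
  | _ n ih =>
  have of_neg_one_le (h : -1 ≤ peirceDefect K U w e) : -2 ≤ peirceDefect K U w e ∧
      (-1 ≤ peirceDefect K U w e ∨
        IsExceptional w fun i => peirceDim K (e i) (⊤ : Submodule K U)) :=
    ⟨by omega, Or.inl h⟩
  have : Nontrivial U := not_subsingleton_iff_nontrivial.1 fun _ =>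
    hz ⟨0, fun _ => Subsingleton.elim _ _⟩
  have : IsArtinian A U := isArtinian_of_tower K inferInstance
  obtain ⟨U', _⟩ := exists_isSimpleModule_submodule (A := A) (U := U)
  by_cases h : ∀ a ∈ quotAnn K U', ∀ u ∈ U', a • u = 0
  · have hquot := neg_three_le_peirceDefect (K := K) (U := U ⧸ U') hw he hsum
    exact of_neg_one_le (by linarith [peirceDefect_quotient_add_two_le hw he hsum h])
  obtain ⟨l, hl⟩ := exists_forall_mem_apply_eq_smul h z
  let y : U →ₗ[A] U := z - algebraMap K (End A U) l
  have hy (u : U) (hu : u ∈ U') : y u = 0 := by simp [y, hl u hu]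
  have hy0 : y ≠ 0 := fun h0 => hz ⟨l, fun u => by
    simpa [y, sub_eq_zero] using LinearMap.congr_fun h0 u⟩
  let yq : (U ⧸ U') →ₗ[A] (U ⧸ U') := U'.mapQ U' y fun u hu => by
    rw [Submodule.mem_comap, hy u hu]
    exact U'.zero_mem
  by_cases hyq : ∃ c : K, ∀ u, yq u = c • u
  · obtain ⟨c, hc⟩ := hyq
    have hyc (u : U) : y u - c • u ∈ U' := (Submodule.Quotient.eq U').1 (hc (U'.mkQ u))
    by_cases hc0 : c = 0
    · refine of_neg_one_le (neg_one_le_peirceDefect_of_range_le hw he hsum h hy hy0 ?_)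
      rintro _ ⟨u, rfl⟩
      simpa [hc0] using hyc u
    · exact neg_two_le_peirceDefect_of_sub_smul_mem hw he hsum h hy hy0 hc0 hyc
  · have hpos := finrank_restrictScalars_pos_of_isSimpleModule (K := K) U'
    have hadd := finrank_eq_finrank_add_finrank_quotient (K := K) U'
    have hrank : 2 ≤ finrank K (U ⧸ U') := by
      by_contra! hlt
      exact hyq (exists_forall_apply_eq_smul_of_finrank_le_one (K := K) (by omega)
        (yq.restrictScalars K))
    exact of_neg_one_le (neg_one_le_peirceDefect_of_le_quotient hw he hsum h hy hy0
      (ih _ (by omega) yq hyq rfl).1 hrank)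

lemma neg_one_le_peirceDefect_of_end [DecidableEq V] (hw : IsTotallyNegativeWeight w)
    (he : ∀ i, IsIdempotentElem (e i)) (hsum : ∑ i, e i = 1) {z : U →ₗ[A] U}
    (hz : ¬ ∃ c : K, ∀ u, z u = c • u)
    (hexc : ¬ IsExceptional w fun i => peirceDim K (e i) (⊤ : Submodule K U)) :
    -1 ≤ peirceDefect K U w e :=
  (neg_two_le_peirceDefect_of_end hw he hsum z hz).2.resolve_right hexc

end Bounds

/-! ### Algebras of matrices: scalar extension to the algebraic closure -/

lemma commutator_mem_span {K E : Type*} [CommRing K] [Ring E] [Algebra K E] {S T : Set E} {a b : E}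
    (ha : a ∈ Submodule.span K S) (hb : b ∈ Submodule.span K T) :
    a * b - b * a ∈ Submodule.span K (Set.image2 (fun x y => x * y - y * x) S T) := by
  have hab := Submodule.apply_mem_map₂ (LinearMap.mul K E - (LinearMap.mul K E).flip) ha hb
  rwa [Submodule.map₂_span_span] at hab

section BaseChange

variable {F V I : Type*} [Field F] [DecidableEq V] [DecidableEq I]

/-- The diagonal idempotent supported on the basis vectors of colour `i`. -/
def colorIdem (F : Type*) [Field F] (c : I → V) (i : V) : Matrix I I F :=
  Matrix.diagonal fun x => if c x = i then 1 else 0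

lemma sum_colorIdem [Fintype V] (c : I → V) : ∑ i, colorIdem F c i = 1 := by
  ext x y
  rw [Matrix.sum_apply]
  simp only [colorIdem, Matrix.diagonal_apply, Matrix.one_apply]
  split_ifs <;> simp

variable [Fintype I]

lemma isIdempotentElem_colorIdem (c : I → V) (i : V) : IsIdempotentElem (colorIdem F c i) := by
  rw [IsIdempotentElem, colorIdem, Matrix.diagonal_mul_diagonal]
  simp

/-- The block `E_j A E_i` of an algebra of matrices, where `E_i = colorIdem F c i`. -/
def matBlock (c : I → V) (A : Subalgebra F (Matrix I I F)) (i j : V) :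
    Submodule F (Matrix I I F) :=
  (Subalgebra.toSubmodule A).map (LinearMap.mulLeftRight F (colorIdem F c j, colorIdem F c i))

/-- The number of basis vectors of colour `i`. -/
def colorCard (c : I → V) (i : V) : ℕ := Fintype.card {x // c x = i}

omit [DecidableEq I] in
lemma colorCard_sigma_fst [Fintype V] (d : V → ℕ) (i : V) :
    colorCard (Sigma.fst : (Σ i, Fin (d i)) → V) i = d i := by
  rw [colorCard, Fintype.card_congr (Equiv.sigmaSubtype i), Fintype.card_fin]

/-- The action of matrices over `F` on column vectors over an extension field `K`. -/
noncomputable def matExt (F K I : Type*) [Field F] [Field K] [Algebra F K] [Fintype I]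
    [DecidableEq I] : Matrix I I F →ₐ[F] End K (I → K) :=
  ((Matrix.toLinAlgEquiv' (R := K) (n := I)).toAlgHom.restrictScalars F).comp
    (Algebra.ofId F K).mapMatrix

variable (K : Type*) [Field K] [Algebra F K]

lemma matExt_apply (M : Matrix I I F) (v : I → K) :
    matExt F K I M v = (M.map (algebraMap F K)).mulVec v := rfl

lemma matExt_apply_single (M : Matrix I I F) (x y : I) :
    matExt F K I M (Pi.single y 1) x = algebraMap F K (M x y) := by
  rw [matExt_apply, Matrix.mulVec_single_one]
  rfl

lemma linearIndependent_matExt {ι : Type*} [Finite ι] {b : ι → Matrix I I F}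
    (hb : LinearIndependent F b) : LinearIndependent K fun k => matExt F K I (b k) := by
  cases nonempty_fintype ι
  refine Fintype.linearIndependent_iff.2 fun g hg k => ?_
  have hentry (x y : I) : ∑ k, g k * algebraMap F K (b k x y) = 0 := by
    simpa [matExt_apply_single] using congrFun (LinearMap.congr_fun hg (Pi.single y 1)) x
  -- It suffices to test the coefficients against the `F`-linear forms on `K`.
  refine (Module.forall_dual_apply_eq_zero_iff F (g k)).1 fun f => ?_
  refine Fintype.linearIndependent_iff.1 hb (fun k => f (g k)) ?_ k
  ext x y
  have hf := congrArg f (hentry x y)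
  simp only [map_sum, mul_comm (g _), ← Algebra.smul_def, map_smul, map_zero] at hf
  simpa [Matrix.sum_apply, mul_comm] using hf

lemma finrank_le_finrank_span_matExt (S : Submodule F (Matrix I I F)) :
    finrank F S ≤ finrank K (Submodule.span K (matExt F K I '' S)) := by
  let b := Module.finBasis F S
  have hb : LinearIndependent F fun k => (b k : Matrix I I F) :=
    b.linearIndependent.map' S.subtype S.ker_subtype
  rw [← Fintype.card_fin (finrank F S), ← finrank_span_eq_card (linearIndependent_matExt K hb)]
  refine Submodule.finrank_mono (Submodule.span_mono ?_)
  rintro _ ⟨k, rfl⟩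
  exact ⟨b k, (b k).2, rfl⟩

lemma finrank_span_matExt_le (S : Submodule F (Matrix I I F)) :
    finrank K (Submodule.span K (matExt F K I '' S)) ≤ finrank F S := by
  let b := Module.finBasis F S
  have hspan : Submodule.span K (matExt F K I '' S) ≤
      Submodule.span K (Set.range fun k => matExt F K I (b k)) := by
    rw [Submodule.span_le]
    rintro _ ⟨x, hx, rfl⟩
    have hx_repr : x = ∑ k, b.repr ⟨x, hx⟩ k • (b k : Matrix I I F) := by
      simpa only [map_sum, map_smul, Submodule.subtype_apply] using
        congrArg S.subtype (b.sum_repr ⟨x, hx⟩).symm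
    rw [hx_repr, map_sum]
    refine sum_mem fun k _ => ?_
    rw [map_smul, ← algebraMap_smul K]
    exact Submodule.smul_mem _ _ (Submodule.subset_span ⟨k, rfl⟩)
  refine (Submodule.finrank_mono hspan).trans ((finrank_range_le_card _).trans ?_)
  rw [Fintype.card_fin]

/-- The `K`-span of an algebra of matrices over `F`. -/
noncomputable def extAlg (A : Subalgebra F (Matrix I I F)) : Subalgebra K (End K (I → K)) :=
  Algebra.adjoin K (matExt F K I '' A)

lemma toSubmodule_extAlg (A : Subalgebra F (Matrix I I F)) :
    Subalgebra.toSubmodule (extAlg K A) = Submodule.span K (matExt F K I '' A) := by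
  have himage : matExt F K I '' A =
      ((A.map (matExt F K I)).toSubmonoid : Set (End K (I → K))) := rfl
  rw [extAlg, Algebra.adjoin_eq_span, himage, Submonoid.closure_eq]

lemma matExt_mem_extAlg {A : Subalgebra F (Matrix I I F)} {a : Matrix I I F} (ha : a ∈ A) :
    matExt F K I a ∈ extAlg K A :=
  Algebra.subset_adjoin ⟨a, ha, rfl⟩

lemma actRank_extAlg (A : Subalgebra F (Matrix I I F)) (S : Submodule K (extAlg K A)) :
    actRank (A := extAlg K A) K (I → K) S = finrank K (S.map (extAlg K A).val.toLinearMap) := rfl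

lemma finrank_le_actRank {A : Subalgebra F (Matrix I I F)} {S₀ : Submodule F (Matrix I I F)}
    {S : Submodule K (extAlg K A)} (h : ∀ x ∈ S₀, ∃ s ∈ S, (s : End K (I → K)) = matExt F K I x) :
    finrank F S₀ ≤ actRank (A := extAlg K A) K (I → K) S := by
  refine (finrank_le_finrank_span_matExt K S₀).trans ?_
  rw [actRank_extAlg]
  refine Submodule.finrank_mono (Submodule.span_le.2 ?_)
  rintro _ ⟨a, ha, rfl⟩
  exact h a ha

lemma finrank_le_actRank_top (A : Subalgebra F (Matrix I I F)) :
    finrank F A ≤ actRank (A := extAlg K A) K (I → K) ⊤ :=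
  finrank_le_actRank K (S₀ := Subalgebra.toSubmodule A) fun _ hx =>
    ⟨⟨_, matExt_mem_extAlg K hx⟩, trivial, rfl⟩

lemma commutator_mem_span_matExt {A : Subalgebra F (Matrix I I F)} {a b : End K (I → K)}
    (ha : a ∈ extAlg K A) (hb : b ∈ extAlg K A) :
    a * b - b * a ∈
      Submodule.span K (matExt F K I '' (commSpan F A).map A.val.toLinearMap) := by
  rw [← Subalgebra.mem_toSubmodule, toSubmodule_extAlg] at ha hb
  refine Submodule.span_mono ?_ (commutator_mem_span ha hb)
  rintro _ ⟨_, ⟨x, hx, rfl⟩, _, ⟨y, hy, rfl⟩, rfl⟩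
  exact ⟨x * y - y * x, ⟨_, commutator_mem_commSpan ⟨x, hx⟩ ⟨y, hy⟩, rfl⟩, by
    rw [map_sub, map_mul, map_mul]⟩

lemma actRank_commSpan_le (A : Subalgebra F (Matrix I I F)) :
    actRank K (I → K) (commSpan K (extAlg K A)) ≤ finrank F (commSpan F A) := by
  refine le_trans ?_ ((finrank_span_matExt_le K _).trans
    (Submodule.finrank_map_le A.val.toLinearMap (commSpan F A)))
  rw [actRank_extAlg]
  refine Submodule.finrank_mono ?_
  rw [Submodule.map_le_iff_le_comap, commSpan, Submodule.span_le]
  rintro _ ⟨a, b, rfl⟩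
  exact commutator_mem_span_matExt K a.2 b.2

variable {c : I → V} {A : Subalgebra F (Matrix I I F)} (hA : ∀ i, colorIdem F c i ∈ A)

/-- The colour idempotents in the extended algebra. -/
noncomputable def extIdem (i : V) : extAlg K A :=
  ⟨matExt F K I (colorIdem F c i), matExt_mem_extAlg K (hA i)⟩

lemma isIdempotentElem_extIdem (i : V) : IsIdempotentElem (extIdem K hA i) :=
  Subtype.ext ((isIdempotentElem_colorIdem (F := F) c i).map (matExt F K I)).eq

lemma sum_extIdem [Fintype V] : ∑ i, extIdem K hA i = 1 := by
  apply Subtype.ext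
  rw [AddSubmonoidClass.coe_finsetSum]
  change ∑ i, matExt F K I (colorIdem F c i) = 1
  rw [← map_sum, sum_colorIdem, map_one]

lemma finrank_matBlock_le (i j : V) :
    finrank F (matBlock c A i j) ≤
      actRank K (I → K) (peirceBlock K (extIdem K hA i) (extIdem K hA j)) := by
  refine finrank_le_actRank K ?_
  rintro _ ⟨a, ha, rfl⟩
  exact ⟨_, ⟨⟨_, matExt_mem_extAlg K ha⟩, rfl⟩, by simp [extIdem]⟩

lemma peirceDim_extIdem (i : V) :
    peirceDim K (extIdem K hA i) (⊤ : Submodule K (I → K)) = colorCard c i := by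
  classical
  have hdiag : actEnd K (I → K) (extIdem K hA i) =
      (Matrix.diagonal fun x => if c x = i then (1 : K) else 0).mulVecLin := by
    ext x y
    simp [extIdem, matExt_apply, colorIdem, Matrix.diagonal_map, Subalgebra.smul_def, apply_ite]
  rw [peirceDim, hdiag, Submodule.map_top]
  refine (Matrix.rank_diagonal fun x => if c x = i then (1 : K) else 0).trans ?_
  exact Fintype.card_congr (Equiv.subtypeEquivRight fun x => by simp)

lemma peirceDefect_extIdem_le [Fintype V] (w : V → V → ℕ) :
    peirceDefect K (I → K) w (extIdem K hA) ≤ ∑ i, ∑ j, (w i j : ℤ) *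
      ((colorCard c i : ℤ) * colorCard c j - finrank F (matBlock c A i j))
        - 2 * ((finrank F A : ℤ) - finrank F (commSpan F A)) := by
  have htop := finrank_le_actRank_top K A
  have hcomm := actRank_commSpan_le K A
  simp only [peirceDefect, peirceDim_extIdem]
  gcongr
  exact finrank_matBlock_le K hA _ _

end BaseChange

section Commuting

variable {F V I : Type*} [Field F] [Fintype I] [DecidableEq I] (K : Type*) [Field K] [Algebra F K]
  {A : Subalgebra F (Matrix I I F)} {ξ : Matrix I I F} (hξ : ∀ a ∈ A, Commute a ξ)

include hξ in
lemma commute_matExt_of_mem_extAlg {a : End K (I → K)} (ha : a ∈ extAlg K A) :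
    Commute a (matExt F K I ξ) := by
  have hle : extAlg K A ≤ Subalgebra.centralizer K {matExt F K I ξ} := by
    refine Algebra.adjoin_le ?_
    rintro _ ⟨x, hx, rfl⟩
    exact by
      simpa [Set.mem_centralizer_iff] using ((hξ x hx).map (matExt F K I)).eq.symm
  exact (Subalgebra.mem_centralizer_iff K).1 (hle ha) _ rfl |>.symm

/-- A matrix commuting with `A`, as an endomorphism of the module `K ^ I` over the extended
algebra. -/
noncomputable def extCommuting : (I → K) →ₗ[extAlg K A] (I → K) where
  toFun := matExt F K I ξ
  map_add' := map_add _
  map_smul' a v := (LinearMap.congr_fun (commute_matExt_of_mem_extAlg K hξ a.2).eq v).symm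

lemma exists_eq_scalar_of_extCommuting_eq_smul
    (h : ∃ k : K, ∀ u, extCommuting K hξ u = k • u) : ∃ k : F, ξ = Matrix.scalar I k := by
  obtain ⟨k, hk⟩ := h
  have hentry (x y : I) : algebraMap F K (ξ x y) = k * (Pi.single y 1 : I → K) x := by
    rw [← matExt_apply_single]
    exact congrFun (hk (Pi.single y 1)) x
  rcases isEmpty_or_nonempty I with hI | ⟨⟨x₀⟩⟩
  · exact ⟨0, Matrix.ext fun x => hI.elim x⟩
  · refine ⟨ξ x₀ x₀, Matrix.ext fun x y => (algebraMap F K).injective ?_⟩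
    rw [hentry, Matrix.scalar_apply, Matrix.diagonal_apply]
    split_ifs with hxy
    · subst hxy
      simp [hentry]
    · rw [Pi.single_eq_of_ne hxy, mul_zero, map_zero]

lemma neg_one_le_of_commute_of_isAlgClosed [IsAlgClosed K] [Fintype V] [DecidableEq V] {c : I → V}
    (hA : ∀ i, colorIdem F c i ∈ A) {w : V → V → ℕ} (hw : IsTotallyNegativeWeight w)
    (hexc : ¬ IsExceptional w (colorCard c)) (hξ : ∀ a ∈ A, Commute a ξ)
    (hns : ¬ ∃ k : F, ξ = Matrix.scalar I k) :
    -1 ≤ ∑ i, ∑ j, (w i j : ℤ) * ((colorCard c i : ℤ) * colorCard c j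
        - finrank F (matBlock c A i j)) - 2 * ((finrank F A : ℤ) - finrank F (commSpan F A)) := by
  have hfin : FiniteDimensional K (extAlg K A) :=
    FiniteDimensional.finiteDimensional_submodule (Subalgebra.toSubmodule (extAlg K A))
  have hdefect := neg_one_le_peirceDefect_of_end (A := extAlg K A) hw
    (isIdempotentElem_extIdem K hA) (sum_extIdem K hA)
    (mt (exists_eq_scalar_of_extCommuting_eq_smul K hξ) hns)
  simp only [peirceDim_extIdem] at hdefect
  exact (hdefect hexc).trans (peirceDefect_extIdem_le K hA w)

end Commuting

/-! ### The dimension estimate for totally negative quivers -/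

section QuiverWeight

namespace FinQuiver

variable (G : FinQuiver)

/-- The number of arrows from `i` to `j`. -/
def arrowCount (i j : G.V) : ℕ :=
  (Finset.univ.filter fun a : G.E => G.s a = i ∧ G.t a = j).card

/-- The negative of the symmetrised Euler form on coordinate vectors: the symmetrised number of
arrows minus twice the identity, the subtraction being harmless when every vertex has a loop. -/
def cartanWeight (i j : G.V) : ℕ :=
  G.arrowCount i j + G.arrowCount j i - if i = j then 2 else 0

end FinQuiver

variable {G : FinQuiver}

lemma one_le_arrowCount (a : G.E) : 1 ≤ G.arrowCount (G.s a) (G.t a) :=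
  Finset.card_pos.2 ⟨a, by simp⟩

lemma cast_cartanWeight (hG : TotallyNegative G) (i j : G.V) :
    (G.cartanWeight i j : ℤ) =
      G.arrowCount i j + G.arrowCount j i - if i = j then 2 else 0 := by
  rw [FinQuiver.cartanWeight]
  split_ifs with h
  · subst h
    have hloops : 2 ≤ G.arrowCount i i := hG.1 i
    rw [Nat.cast_sub (by omega), Nat.cast_add, Nat.cast_two]
  · simp

lemma isTotallyNegativeWeight_cartanWeight (hG : TotallyNegative G) :
    IsTotallyNegativeWeight G.cartanWeight where
  symm i j := by simp only [FinQuiver.cartanWeight, add_comm, eq_comm]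
  two_le_diag i := by
    have hloops : 2 ≤ G.arrowCount i i := hG.1 i
    simp only [FinQuiver.cartanWeight, if_true]
    omega
  one_le i j := by
    by_cases h : i = j
    · have hloops : 2 ≤ G.arrowCount j j := hG.1 j
      simp only [FinQuiver.cartanWeight, h, if_true]
      omega
    · simp only [FinQuiver.cartanWeight, if_neg h]
      obtain ⟨a, ⟨rfl, rfl⟩ | ⟨rfl, rfl⟩⟩ := hG.2 i j h
      all_goals have := one_le_arrowCount a; omega

lemma sum_arrowCount_mul (X : G.V → G.V → ℤ) :
    ∑ i, ∑ j, (G.arrowCount i j : ℤ) * X i j = ∑ a : G.E, X (G.s a) (G.t a) := by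
  rw [← Finset.sum_fiberwise (s := Finset.univ) (g := fun a => (G.s a, G.t a)),
    Fintype.sum_prod_type]
  refine Finset.sum_congr rfl fun i _ => Finset.sum_congr rfl fun j _ => ?_
  have hconst : ∀ a ∈ Finset.univ.filter fun a : G.E => (G.s a, G.t a) = (i, j),
      X (G.s a) (G.t a) = X i j := fun a ha => by
    rw [(Prod.mk.inj (Finset.mem_filter.1 ha).2).1, (Prod.mk.inj (Finset.mem_filter.1 ha).2).2]
  rw [Finset.sum_congr rfl hconst, Finset.sum_const, nsmul_eq_mul]
  simp only [FinQuiver.arrowCount, Prod.mk.injEq]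

lemma sum_cartanWeight_mul (hG : TotallyNegative G) {X : G.V → G.V → ℤ}
    (hX : ∀ i j, X i j = X j i) :
    ∑ i, ∑ j, (G.cartanWeight i j : ℤ) * X i j =
      2 * (∑ a : G.E, X (G.s a) (G.t a) - ∑ i, X i i) := by
  have hswap : ∑ i, ∑ j, (G.arrowCount j i : ℤ) * X i j = ∑ a : G.E, X (G.s a) (G.t a) := by
    rw [Finset.sum_comm, ← sum_arrowCount_mul]
    exact Finset.sum_congr rfl fun i _ => Finset.sum_congr rfl fun j _ => by rw [hX]
  simp only [cast_cartanWeight hG, sub_mul, add_mul, Finset.sum_sub_distrib,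
    Finset.sum_add_distrib, sum_arrowCount_mul, hswap]
  simp only [ite_mul, zero_mul, Finset.sum_ite_eq, Finset.mem_univ, if_true, ← Finset.mul_sum]
  ring

lemma card_arrows_between {i j : G.V} (hij : i ≠ j) :
    (Finset.univ.filter fun a : G.E =>
      (G.s a = i ∧ G.t a = j) ∨ (G.s a = j ∧ G.t a = i)).card = G.cartanWeight i j := by
  classical
  rw [FinQuiver.cartanWeight, if_neg hij, Nat.sub_zero, Finset.filter_or,
    Finset.card_union_of_disjoint]
  · rfl
  · rw [Finset.disjoint_filter]
    rintro a - ⟨hi, -⟩ ⟨hj, -⟩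
    exact hij (hi.symm.trans hj)

lemma not_isExceptional_of_propertyP {d : G.V → ℕ} (hP : PropertyP G d) :
    ¬ IsExceptional G.cartanWeight d := by
  rintro ⟨i, j, hij, hw, rfl⟩
  refine hP.2 ⟨i, j, hij, ?_, (card_arrows_between hij).trans hw, by simp [hij], by simp [hij]⟩
  ext k
  by_cases hi : k = i <;> by_cases hj : k = j <;> simp [hi, hj]

lemma finrank_commuting_estimate {d : G.V → ℕ} (hP : PropertyP G d) {F : Type*} [Field F]
    {A : Subalgebra F (Matrix (Σ i, Fin (d i)) (Σ i, Fin (d i)) F)}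
    (hA : ∀ i, colorIdem F Sigma.fst i ∈ A)
    (hsymm : ∀ i j, finrank F (matBlock Sigma.fst A i j) = finrank F (matBlock Sigma.fst A j i))
    {ξ : Matrix (Σ i, Fin (d i)) (Σ i, Fin (d i)) F} (hξ : ∀ a ∈ A, Commute a ξ)
    (hns : ¬ ∃ k : F, ξ = Matrix.scalar _ k) :
    ∑ i, d i * d i + finrank F A + ∑ a : G.E, finrank F (matBlock Sigma.fst A (G.s a) (G.t a)) ≤
      ∑ a : G.E, d (G.s a) * d (G.t a) + finrank F (commSpan F A)
        + ∑ i, finrank F (matBlock Sigma.fst A i i) := by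
  have hcard : colorCard (Sigma.fst : (Σ i, Fin (d i)) → G.V) = d := funext (colorCard_sigma_fst d)
  have hdefect := neg_one_le_of_commute_of_isAlgClosed (AlgebraicClosure F) hA
    (isTotallyNegativeWeight_cartanWeight hP.1)
    (by rw [hcard]; exact not_isExceptional_of_propertyP hP) hξ hns
  rw [hcard, sum_cartanWeight_mul hP.1 (fun i j => by rw [hsymm i j, mul_comm])] at hdefect
  simp only [Finset.sum_sub_distrib] at hdefect
  zify
  omega

end QuiverWeight

/-! ### Power series commuting modulo a power of the variable -/

section TracialMap

variable {B N : Type*} [Ring B] [AddCommGroup N]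

lemma map_commutator_mul {τ : B →+ N} (hτ : ∀ x y, τ (x * y) = τ (y * x)) (x y z : B) :
    τ ((x * y - y * x) * z) = τ (x * (y * z - z * y)) := by
  rw [sub_mul, mul_sub, map_sub, map_sub, mul_assoc, mul_assoc, hτ y, mul_assoc]

end TracialMap

section PowerSeriesDivisibility

open PowerSeries

variable {B : Type*} [Ring B] {n : ℕ} {z : B⟦X⟧}

lemma X_pow_dvd_mul_left (y : B⟦X⟧) (hz : X ^ n ∣ z) : X ^ n ∣ y * z := by
  obtain ⟨w, rfl⟩ := hz
  exact ⟨y * w, by rw [← mul_assoc, (commute_X_pow y n).eq, mul_assoc]⟩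

lemma X_pow_dvd_commutator (y : B⟦X⟧) (hz : X ^ n ∣ z) : X ^ n ∣ z * y - y * z :=
  dvd_sub (hz.mul_right y) (X_pow_dvd_mul_left y hz)

lemma X_pow_succ_dvd_X_mul_iff : X ^ (n + 1) ∣ X * z ↔ X ^ n ∣ z := by
  simp only [X_pow_dvd_iff, Nat.forall_lt_succ_left', coeff_zero_X_mul, coeff_succ_X_mul, true_and]

lemma coeff_zero_mul (y z : B⟦X⟧) : coeff 0 (y * z) = coeff 0 y * coeff 0 z := by
  rw [coeff_mul, Finset.Nat.antidiagonal_zero, Finset.sum_singleton]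

lemma coeff_X_pow_mul_self (n : ℕ) (z : B⟦X⟧) : coeff n (X ^ n * z) = coeff 0 z := by
  simpa only [zero_add] using coeff_X_pow_mul z n 0

lemma coeff_mul_of_X_pow_dvd_right (y : B⟦X⟧) (hz : X ^ n ∣ z) :
    coeff n (y * z) = coeff 0 y * coeff n z := by
  obtain ⟨w, rfl⟩ := hz
  rw [← mul_assoc, (commute_X_pow y n).eq, mul_assoc, coeff_X_pow_mul_self, coeff_X_pow_mul_self,
    coeff_zero_mul]

lemma coeff_mul_of_X_pow_dvd_left (y : B⟦X⟧) (hz : X ^ n ∣ z) :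
    coeff n (z * y) = coeff n z * coeff 0 y := by
  obtain ⟨w, rfl⟩ := hz
  rw [mul_assoc, coeff_X_pow_mul_self, coeff_X_pow_mul_self, coeff_zero_mul]

lemma map_coeff_mul_comm {N : Type*} [AddCommGroup N] {τ : B →+ N}
    (hτ : ∀ x y, τ (x * y) = τ (y * x)) (n : ℕ) (u v : B⟦X⟧) :
    τ (coeff n (u * v)) = τ (coeff n (v * u)) := by
  rw [coeff_mul, coeff_mul, ← Finset.Nat.sum_antidiagonal_swap, map_sum, map_sum]
  exact Finset.sum_congr rfl fun p _ => hτ _ _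

end PowerSeriesDivisibility

section Stage

open PowerSeries

variable {F B : Type*} [CommRing F] [Ring B] [Algebra F B] {n : ℕ} {Ξ Ξ' : B⟦X⟧} {a b : B}

/-- The algebra of constant coefficients of the power series commuting with `Ξ` modulo `X ^ n`;
these algebras decrease with `n`. -/
def stage (F : Type*) {B : Type*} [CommRing F] [Ring B] [Algebra F B] (Ξ : B⟦X⟧) (n : ℕ) :
    Subalgebra F B where
  carrier := {a | ∃ y, coeff 0 y = a ∧ X ^ n ∣ Ξ * y - y * Ξ}
  mul_mem' := by
    rintro _ _ ⟨y, rfl, hy⟩ ⟨z, rfl, hz⟩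
    refine ⟨y * z, coeff_zero_mul .., ?_⟩
    have hleibniz : Ξ * (y * z) - y * z * Ξ = (Ξ * y - y * Ξ) * z + y * (Ξ * z - z * Ξ) := by
      noncomm_ring
    rw [hleibniz]
    exact dvd_add (hy.mul_right z) (X_pow_dvd_mul_left y hz)
  add_mem' := by
    rintro _ _ ⟨y, rfl, hy⟩ ⟨z, rfl, hz⟩
    refine ⟨y + z, map_add .., ?_⟩
    rw [mul_add, add_mul, add_sub_add_comm]
    exact dvd_add hy hz
  algebraMap_mem' r := ⟨algebraMap F B⟦X⟧ r, by
    rw [PowerSeries.algebraMap_apply, coeff_zero_C], by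
    rw [Algebra.commutes, sub_self]
    exact dvd_zero _⟩

lemma mem_stage : a ∈ stage F Ξ n ↔ ∃ y, coeff 0 y = a ∧ X ^ n ∣ Ξ * y - y * Ξ := Iff.rfl

lemma stage_zero (Ξ : B⟦X⟧) : stage F Ξ 0 = ⊤ :=
  eq_top_iff.2 fun a _ => ⟨C a, coeff_zero_C a, by rw [pow_zero]; exact one_dvd _⟩

lemma stage_antitone (Ξ : B⟦X⟧) : Antitone (stage F Ξ) := by
  rintro m n hmn _ ⟨y, rfl, hy⟩
  exact ⟨y, rfl, (pow_dvd_pow X hmn).trans hy⟩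

lemma stage_le_stage_of_X_pow_dvd_sub (h : X ^ n ∣ Ξ - Ξ') : stage F Ξ n ≤ stage F Ξ' n := by
  rintro _ ⟨y, rfl, hy⟩
  refine ⟨y, rfl, ?_⟩
  have hdiff : Ξ' * y - y * Ξ' = (Ξ * y - y * Ξ) - ((Ξ - Ξ') * y - y * (Ξ - Ξ')) := by
    noncomm_ring
  rw [hdiff]
  exact dvd_sub hy (X_pow_dvd_commutator y h)

lemma stage_eq_stage_of_X_pow_dvd_sub (h : X ^ n ∣ Ξ - Ξ') : stage F Ξ n = stage F Ξ' n :=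
  le_antisymm (stage_le_stage_of_X_pow_dvd_sub h)
    (stage_le_stage_of_X_pow_dvd_sub ((dvd_sub_comm).1 h))

lemma commute_coeff_zero_of_mem_stage (h : a ∈ stage F Ξ (n + 1)) : Commute a (coeff 0 Ξ) := by
  obtain ⟨y, rfl, hy⟩ := h
  have hzero := X_pow_dvd_iff.1 hy 0 n.succ_pos
  rw [map_sub, sub_eq_zero, coeff_zero_mul, coeff_zero_mul] at hzero
  exact hzero.symm

lemma stage_succ_algebraMap_add_X_mul (c : F) (Ξ : B⟦X⟧) (n : ℕ) :
    stage F (algebraMap F B⟦X⟧ c + X * Ξ) (n + 1) = stage F Ξ n := by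
  ext a
  rw [mem_stage, mem_stage]
  refine exists_congr fun y => and_congr_right fun _ => ?_
  have hshift : (algebraMap F B⟦X⟧ c + X * Ξ) * y - y * (algebraMap F B⟦X⟧ c + X * Ξ) =
      X * (Ξ * y - y * Ξ) := by
    rw [add_mul, mul_add, Algebra.commutes, ← mul_assoc y, (commute_X y).eq]
    noncomm_ring
  rw [hshift, X_pow_succ_dvd_X_mul_iff]

lemma mem_stage_of_forall_commute_coeff (h : ∀ k, Commute a (coeff k Ξ)) (n : ℕ) :
    a ∈ stage F Ξ n := by
  refine ⟨C a, coeff_zero_C a, ?_⟩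
  have hcomm : Ξ * C a = C a * Ξ := by
    ext k
    rw [coeff_mul_C, coeff_C_mul, (h k).eq]
  rw [hcomm, sub_self]
  exact dvd_zero _

lemma map_sub_mul_commutator_eq_zero_of_mem_stage {N : Type*} [AddCommGroup N] {τ : B →+ N}
    (hτ : ∀ x y, τ (x * y) = τ (y * x)) (h : X ^ n ∣ Ξ - Ξ') (ha : a ∈ stage F Ξ' (n + 1))
    (hb : b ∈ stage F Ξ (n + 1)) :
    τ ((coeff n Ξ - coeff n Ξ') * (a * b - b * a)) = 0 := by
  obtain ⟨v, hv₀, hv⟩ := ha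
  obtain ⟨w, hw₀, hw⟩ := hb
  -- The lift `v` of `a` need not commute with `Ξ` modulo `X ^ (n + 1)`, but it does modulo `X ^ n`,
  -- with the commutator of `ω` and `a` as leading coefficient.
  set ω := coeff n Ξ - coeff n Ξ'
  have hsplit : Ξ * v - v * Ξ = (Ξ' * v - v * Ξ') + ((Ξ - Ξ') * v - v * (Ξ - Ξ')) := by
    noncomm_ring
  have hdvd : X ^ n ∣ Ξ * v - v * Ξ := by
    rw [hsplit]
    exact dvd_add ((pow_dvd_pow X n.le_succ).trans hv) (X_pow_dvd_commutator v h)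
  have hlead : coeff n (Ξ * v - v * Ξ) = ω * a - a * ω := by
    rw [hsplit, map_add, X_pow_dvd_iff.1 hv n n.lt_succ_self, map_sub,
      coeff_mul_of_X_pow_dvd_left v h, coeff_mul_of_X_pow_dvd_right v h, hv₀, map_sub, zero_add]
  have hw' : X ^ (n + 1) ∣ (w * Ξ - Ξ * w) * v := (dvd_sub_comm.1 hw).mul_right _
  have hrotate := map_commutator_mul (τ := τ.comp (coeff n).toAddMonoidHom)
    (map_coeff_mul_comm hτ n) w Ξ v
  simp only [AddMonoidHom.comp_apply, LinearMap.toAddMonoidHom_coe] at hrotate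
  rw [X_pow_dvd_iff.1 hw' n n.lt_succ_self, map_zero, coeff_mul_of_X_pow_dvd_right w hdvd, hw₀,
    hlead, hτ, map_commutator_mul hτ] at hrotate
  exact hrotate.symm

end Stage

section FinSeries

open PowerSeries

variable {B : Type*} [Ring B] {n : ℕ}

/-- The power series whose first coefficients are the entries of `y` and whose other coefficients
vanish; it represents `y` as a series modulo `X ^ n`. -/
noncomputable def finSeries (y : Fin n → B) : B⟦X⟧ :=
  PowerSeries.mk fun k => if h : k < n then y ⟨k, h⟩ else 0

lemma coeff_finSeries_of_lt (y : Fin n → B) {k : ℕ} (h : k < n) :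
    coeff k (finSeries y) = y ⟨k, h⟩ := by
  rw [finSeries, coeff_mk, dif_pos h]

lemma coeff_finSeries_of_le (y : Fin n → B) {k : ℕ} (h : n ≤ k) : coeff k (finSeries y) = 0 := by
  rw [finSeries, coeff_mk, dif_neg h.not_gt]

lemma finSeries_zero : finSeries (0 : Fin n → B) = 0 := by
  ext k
  simp [finSeries]

lemma finSeries_add (y z : Fin n → B) : finSeries (y + z) = finSeries y + finSeries z := by
  ext k
  rw [map_add]
  by_cases h : k < n
  · simp only [coeff_finSeries_of_lt _ h, Pi.add_apply]
  · simp only [coeff_finSeries_of_le _ (not_lt.1 h), add_zero]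

lemma finSeries_smul {F : Type*} [CommRing F] [Algebra F B] (r : F) (y : Fin n → B) :
    finSeries (r • y) = r • finSeries y := by
  ext k
  rw [PowerSeries.coeff_smul]
  by_cases h : k < n
  · simp only [coeff_finSeries_of_lt _ h, Pi.smul_apply]
  · simp only [coeff_finSeries_of_le _ (not_lt.1 h), smul_zero]

lemma finSeries_cons (b : B) (y : Fin n → B) :
    finSeries (Fin.cons b y : Fin (n + 1) → B) = C b + X * finSeries y := by
  ext k
  cases k with
  | zero => rw [coeff_finSeries_of_lt _ n.succ_pos]; simp
  | succ k =>
    rw [map_add, coeff_succ_C, zero_add, coeff_succ_X_mul]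
    by_cases h : k < n
    · rw [coeff_finSeries_of_lt _ h, coeff_finSeries_of_lt _ (Nat.succ_lt_succ h)]
      rfl
    · rw [coeff_finSeries_of_le _ (not_lt.1 h), coeff_finSeries_of_le _ (by lia)]

lemma X_pow_dvd_finSeries_snoc_sub (y : Fin n → B) (b : B) :
    X ^ n ∣ finSeries (Fin.snoc y b : Fin (n + 1) → B) - finSeries y := by
  refine X_pow_dvd_iff.2 fun k hk => ?_
  rw [map_sub, coeff_finSeries_of_lt _ hk, coeff_finSeries_of_lt _ (hk.trans n.lt_succ_self),
    sub_eq_zero]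
  exact Fin.snoc_castSucc (α := fun _ => B) b y ⟨k, hk⟩

lemma coeff_finSeries_snoc (y : Fin n → B) (b : B) :
    coeff n (finSeries (Fin.snoc y b : Fin (n + 1) → B)) = b := by
  rw [coeff_finSeries_of_lt _ n.lt_succ_self]
  exact Fin.snoc_last (α := fun _ => B) b y

lemma X_pow_dvd_finSeries_coeff_sub (n : ℕ) (z : B⟦X⟧) :
    X ^ n ∣ finSeries (fun k : Fin n => coeff (k : ℕ) z) - z :=
  X_pow_dvd_iff.2 fun k hk => by rw [map_sub, coeff_finSeries_of_lt _ hk, sub_self]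

end FinSeries

section CommutingJets

open PowerSeries

variable {F B : Type*} [CommRing F] [Ring B] [Algebra F B] {n : ℕ} {Ξ : B⟦X⟧} {e f : B}

/-- The series modulo `X ^ n` with coefficients in the block `e B f` that commute with `Ξ`
modulo `X ^ n`. -/
def commutingJets (F : Type*) {B : Type*} [CommRing F] [Ring B] [Algebra F B] (Ξ : B⟦X⟧)
    (e f : B) (n : ℕ) : Submodule F (Fin n → B) where
  carrier := {y | (∀ k, e * y k * f = y k) ∧ X ^ n ∣ Ξ * finSeries y - finSeries y * Ξ}
  zero_mem' := by
    refine ⟨fun k => by rw [Pi.zero_apply, mul_zero, zero_mul], ?_⟩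
    rw [finSeries_zero, mul_zero, zero_mul, sub_zero]
    exact dvd_zero _
  add_mem' := by
    rintro y z ⟨hy, hy'⟩ ⟨hz, hz'⟩
    refine ⟨fun k => by rw [Pi.add_apply, mul_add, add_mul, hy, hz], ?_⟩
    rw [finSeries_add, mul_add, add_mul, add_sub_add_comm]
    exact dvd_add hy' hz'
  smul_mem' := by
    rintro r y ⟨hy, w, hw⟩
    refine ⟨fun k => by rw [Pi.smul_apply, mul_smul_comm, smul_mul_assoc, hy], r • w, ?_⟩
    rw [finSeries_smul, mul_smul_comm, smul_mul_assoc, ← smul_sub, hw, mul_smul_comm]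

/-- Multiplication by `X`, as a map from series modulo `X ^ n` to series modulo `X ^ (n + 1)`. -/
def consZero (F B : Type*) [CommRing F] [Ring B] [Algebra F B] (n : ℕ) :
    (Fin n → B) →ₗ[F] (Fin (n + 1) → B) where
  toFun y := Fin.cons 0 y
  map_add' y z := by
    ext k
    refine Fin.cases (by simp) (fun k => by simp) k
  map_smul' r y := by
    ext k
    refine Fin.cases (by simp) (fun k => by simp) k

lemma consZero_injective : Function.Injective (consZero F B n) := fun _ _ h =>
  congrArg Fin.tail h

lemma consZero_mem_commutingJets_iff {y : Fin n → B} :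
    consZero F B n y ∈ commutingJets F Ξ e f (n + 1) ↔ y ∈ commutingJets F Ξ e f n := by
  have hX : finSeries (consZero F B n y) = X * finSeries y :=
    (finSeries_cons 0 y).trans (by rw [map_zero, zero_add])
  have hcomm : Ξ * finSeries (consZero F B n y) - finSeries (consZero F B n y) * Ξ =
      X * (Ξ * finSeries y - finSeries y * Ξ) := by
    rw [hX, ← mul_assoc, (commute_X Ξ).eq]
    noncomm_ring
  refine and_congr ?_ (by rw [hcomm, X_pow_succ_dvd_X_mul_iff])
  rw [Fin.forall_fin_succ]
  refine and_iff_right ?_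
  change e * 0 * f = 0
  rw [mul_zero, zero_mul]

lemma commutingJets_inf_ker_proj_zero (Ξ : B⟦X⟧) (e f : B) (n : ℕ) :
    commutingJets F Ξ e f (n + 1) ⊓ LinearMap.ker (LinearMap.proj (R := F) (φ := fun _ => B) 0) =
      (commutingJets F Ξ e f n).map (consZero F B n) := by
  ext y
  constructor
  · rintro ⟨hy, hy₀ : y 0 = 0⟩
    have hcons : consZero F B n (Fin.tail y) = y := by
      change Fin.cons 0 (Fin.tail y) = y
      rw [← hy₀, Fin.cons_self_tail]
    exact ⟨Fin.tail y, consZero_mem_commutingJets_iff.1 (hcons.symm ▸ hy), hcons⟩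
  · rintro ⟨y, hy, rfl⟩
    exact ⟨consZero_mem_commutingJets_iff.2 hy, rfl⟩

lemma truncation_mem_commutingJets (he : IsIdempotentElem e) (hf : IsIdempotentElem f)
    (heΞ : ∀ k, Commute e (coeff k Ξ)) (hfΞ : ∀ k, Commute f (coeff k Ξ)) {z : B⟦X⟧}
    (hz : X ^ n ∣ Ξ * z - z * Ξ) :
    (fun k : Fin n => coeff (k : ℕ) (C e * z * C f)) ∈ commutingJets F Ξ e f n := by
  have hC {g : B} (hg : ∀ k, Commute g (coeff k Ξ)) : C g * Ξ = Ξ * C g := by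
    ext k
    rw [coeff_C_mul, coeff_mul_C, (hg k).eq]
  refine ⟨fun k => ?_, ?_⟩
  · simp only [coeff_C_mul, coeff_mul_C]
    rw [mul_assoc, mul_assoc (e * _), hf.eq, ← mul_assoc, ← mul_assoc, he.eq]
  · set w := C e * z * C f with hw
    set u := finSeries fun k : Fin n => coeff (k : ℕ) w
    have hwΞ : Ξ * w - w * Ξ = C e * ((Ξ * z - z * Ξ) * C f) := by
      rw [hw, mul_assoc (C e * z), hC hfΞ, ← mul_assoc, ← mul_assoc, ← hC heΞ]
      noncomm_ring
    have hsplit : Ξ * u - u * Ξ = (Ξ * w - w * Ξ) - ((u - w) * Ξ - Ξ * (u - w)) := by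
      noncomm_ring
    rw [hsplit, hwΞ]
    exact dvd_sub (X_pow_dvd_mul_left _ (hz.mul_right _))
      (X_pow_dvd_commutator Ξ (X_pow_dvd_finSeries_coeff_sub n w))

lemma commutingJets_map_proj_zero (he : IsIdempotentElem e) (hf : IsIdempotentElem f)
    (heΞ : ∀ k, Commute e (coeff k Ξ)) (hfΞ : ∀ k, Commute f (coeff k Ξ)) (n : ℕ) :
    (commutingJets F Ξ e f (n + 1)).map (LinearMap.proj (R := F) (φ := fun _ => B) 0) =
      (Subalgebra.toSubmodule (stage F Ξ (n + 1))).map (LinearMap.mulLeftRight F (e, f)) := by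
  ext a
  constructor
  · rintro ⟨y, ⟨hblock, hcomm⟩, rfl⟩
    exact ⟨y 0, ⟨finSeries y, coeff_finSeries_of_lt y n.succ_pos, hcomm⟩, hblock 0⟩
  · rintro ⟨_, ⟨z, rfl, hz⟩, rfl⟩
    exact ⟨_, truncation_mem_commutingJets he hf heΞ hfΞ hz, by
      simp [LinearMap.mulLeftRight_apply]⟩

lemma finrank_commutingJets {F : Type*} [Field F] [Algebra F B] [FiniteDimensional F B]
    (he : IsIdempotentElem e) (hf : IsIdempotentElem f)
    (heΞ : ∀ k, Commute e (coeff k Ξ)) (hfΞ : ∀ k, Commute f (coeff k Ξ)) (n : ℕ) :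
    finrank F (commutingJets F Ξ e f n) = ∑ k ∈ Finset.range n,
      finrank F ((Subalgebra.toSubmodule (stage F Ξ (k + 1))).map
        (LinearMap.mulLeftRight F (e, f))) := by
  induction n with
  | zero =>
    rw [Finset.sum_range_zero]
    exact finrank_zero_of_subsingleton
  | succ n ih =>
    rw [Finset.sum_range_succ, ← ih, ← finrank_map_add_finrank_inf_ker (LinearMap.proj 0),
      commutingJets_inf_ker_proj_zero, commutingJets_map_proj_zero he hf heΞ hfΞ, add_comm,
      ← (Submodule.equivMapOfInjective _ consZero_injective _).finrank_eq]

end CommutingJets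

/-! ### The trace pairing with commutators -/

section CommutatorPairing

variable {F V I g : Type*} [Field F] [DecidableEq V] [Fintype I] [DecidableEq I]
  [AddCommGroup g] [Module F g]

/-- The trace pairing `(η, z) ↦ tr (β η * z)` between `g` and the commutators of `A`. -/
noncomputable def commPairing (β : g →ₗ[F] Matrix I I F) (A : Subalgebra F (Matrix I I F)) :
    g →ₗ[F] commSpan F A →ₗ[F] F :=
  ((LinearMap.mul F (Matrix I I F)).compr₂ (Matrix.traceLinearMap I F F)).compl₁₂ β
    (A.val.toLinearMap ∘ₗ (commSpan F A).subtype)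

lemma commPairing_apply (β : g →ₗ[F] Matrix I I F) (A : Subalgebra F (Matrix I I F)) (η : g)
    (z : commSpan F A) : commPairing β A η z = (β η * (z : A)).trace := rfl

lemma mem_ker_commPairing {β : g →ₗ[F] Matrix I I F} {A : Subalgebra F (Matrix I I F)} {η : g}
    (h : ∀ a ∈ A, ∀ b ∈ A, (β η * (a * b - b * a)).trace = 0) :
    η ∈ LinearMap.ker (commPairing β A) := by
  have hle : commSpan F A ≤ LinearMap.ker
      (Matrix.traceLinearMap I F F ∘ₗ LinearMap.mulLeft F (β η) ∘ₗ A.val.toLinearMap) := by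
    rw [commSpan, Submodule.span_le]
    rintro _ ⟨a, b, rfl⟩
    exact h a a.2 b b.2
  rw [LinearMap.mem_ker]
  ext z
  exact hle z.2

lemma finrank_ker_add_finrank_le_of_bilinear {M N : Type*} [AddCommGroup M] [Module F M]
    [AddCommGroup N] [Module F N] [FiniteDimensional F M] [FiniteDimensional F N]
    (b : M →ₗ[F] N →ₗ[F] F) :
    finrank F (LinearMap.ker b) + finrank F N ≤ finrank F M + finrank F (LinearMap.ker b.flip) := by
  have hrank := LinearMap.finrank_range_add_finrank_ker b
  have hrank_flip := LinearMap.finrank_range_add_finrank_ker b.flip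
  have hrange : finrank F (LinearMap.range b.flip) ≤ finrank F (LinearMap.range b) := by
    rw [← LinearMap.finrank_range_dualMap_eq_finrank_range b]
    refine Submodule.finrank_mono ?_
    rintro _ ⟨y, rfl⟩
    exact ⟨Dual.eval F N y, rfl⟩
  lia

lemma colorIdem_mul_of_ne (c : I → V) {i j : V} (h : i ≠ j) :
    colorIdem F c i * colorIdem F c j = 0 := by
  rw [colorIdem, colorIdem, Matrix.diagonal_mul_diagonal, Matrix.diagonal_eq_zero]
  ext x
  by_cases hx : c x = i
  · simp [hx, h]
  · simp [hx]

lemma colorIdem_mul_matBlock_mul {c : I → V} {A : Subalgebra F (Matrix I I F)} {i j : V}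
    {x : Matrix I I F} (hx : x ∈ matBlock c A i j) :
    colorIdem F c j * x * colorIdem F c i = x := by
  obtain ⟨a, -, rfl⟩ := hx
  rw [LinearMap.mulLeftRight_apply, ← mul_assoc, ← mul_assoc, (isIdempotentElem_colorIdem c j).eq,
    mul_assoc (_ * a), (isIdempotentElem_colorIdem c i).eq]

/-- The map sending a matrix to the family of its diagonal blocks. -/
def diagBlocks (F : Type*) [Field F] (c : I → V) : Matrix I I F →ₗ[F] V → Matrix I I F :=
  LinearMap.pi fun i => LinearMap.mulLeftRight F (colorIdem F c i, colorIdem F c i)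

lemma diagBlocks_apply (c : I → V) (m : Matrix I I F) (i : V) :
    diagBlocks F c m i = colorIdem F c i * m * colorIdem F c i := rfl

lemma diagBlocks_sum_matBlock [Fintype V] {c : I → V} {A : Subalgebra F (Matrix I I F)}
    (x : ∀ i, matBlock c A i i) : diagBlocks F c (∑ i, (x i : Matrix I I F)) = fun i => ↑(x i) := by
  ext1 k
  rw [diagBlocks_apply, Finset.mul_sum, Finset.sum_mul, Finset.sum_eq_single k]
  · exact colorIdem_mul_matBlock_mul (x k).2
  · intro i _ hi
    rw [← colorIdem_mul_matBlock_mul (x i).2, mul_assoc, mul_assoc, mul_assoc,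
      colorIdem_mul_of_ne c hi, mul_zero, mul_zero, mul_zero]
  · exact fun hk => absurd (Finset.mem_univ k) hk

lemma sum_finrank_matBlock_le_finrank_map_diagBlocks [Fintype V] {c : I → V}
    {A : Subalgebra F (Matrix I I F)} (hA : ∀ i, colorIdem F c i ∈ A) :
    ∑ i, finrank F (matBlock c A i i) ≤
      finrank F ((Subalgebra.toSubmodule A).map (diagBlocks F c)) := by
  let incl : (∀ i, matBlock c A i i) →ₗ[F] V → Matrix I I F :=
    LinearMap.pi fun i => (matBlock c A i i).subtype ∘ₗ LinearMap.proj i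
  have hincl : Function.Injective incl := fun x y h =>
    funext fun i => Subtype.ext (congrFun h i)
  rw [← Module.finrank_pi_fintype, ← LinearMap.finrank_range_of_inj hincl]
  refine Submodule.finrank_mono ?_
  rintro _ ⟨x, rfl⟩
  refine ⟨∑ i, (x i : Matrix I I F), sum_mem fun i _ => ?_, diagBlocks_sum_matBlock x⟩
  obtain ⟨a, ha, hax⟩ := (x i).2
  rw [← hax]
  exact A.mul_mem (A.mul_mem (hA i) ha) (hA i)

lemma finrank_ker_flip_commPairing_le {c : I → V} {A : Subalgebra F (Matrix I I F)}
    {β : g →ₗ[F] Matrix I I F}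
    (hβ : ∀ i m, colorIdem F c i * m * colorIdem F c i ∈ LinearMap.range β) :
    finrank F (LinearMap.ker (commPairing β A).flip) ≤
      finrank F (Subalgebra.toSubmodule A ⊓ LinearMap.ker (diagBlocks F c) : Submodule F _) := by
  have hinj : Function.Injective (A.val.toLinearMap ∘ₗ (commSpan F A).subtype) :=
    Subtype.val_injective.comp Subtype.val_injective
  rw [LinearEquiv.finrank_eq (Submodule.equivMapOfInjective _ hinj _)]
  refine Submodule.finrank_mono ?_
  rintro _ ⟨z, hz, rfl⟩
  refine ⟨z.1.2, funext fun i => Matrix.ext_iff_trace_mul_left.2 fun m => ?_⟩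
  obtain ⟨η, hη⟩ := hβ i m
  have hpair := LinearMap.congr_fun (LinearMap.mem_ker.1 hz) η
  rw [LinearMap.flip_apply, commPairing_apply, hη] at hpair
  rw [Pi.zero_apply, mul_zero, Matrix.trace_zero, diagBlocks_apply, ← mul_assoc,
    Matrix.trace_mul_comm]
  simp only [mul_assoc, LinearMap.zero_apply] at hpair ⊢
  exact hpair

lemma finrank_ker_commPairing_add_le [Fintype V] [FiniteDimensional F g] {c : I → V}
    {A : Subalgebra F (Matrix I I F)} (hA : ∀ i, colorIdem F c i ∈ A) {β : g →ₗ[F] Matrix I I F}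
    (hβ : ∀ i m, colorIdem F c i * m * colorIdem F c i ∈ LinearMap.range β) :
    finrank F (LinearMap.ker (commPairing β A)) + finrank F (commSpan F A)
      + ∑ i, finrank F (matBlock c A i i) ≤ finrank F g + finrank F A := by
  have hrank := finrank_ker_add_finrank_le_of_bilinear (N := commSpan F A) (commPairing β A)
  have hker := finrank_ker_flip_commPairing_le (A := A) hβ
  have hblocks := sum_finrank_matBlock_le_finrank_map_diagBlocks hA
  have hA_rank : _ = finrank F A :=
    finrank_map_add_finrank_inf_ker (diagBlocks F c) (Subalgebra.toSubmodule A)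
  lia

end CommutatorPairing

/-! ### Stages of jets and the recursion on their length -/

section Summability

lemma summable_of_le_mul_add {u s : ℕ → ℝ} {θ : ℝ} (hu : ∀ n, 0 ≤ u n) (hs : ∀ n, 0 ≤ s n)
    (hθ : θ < 1) (h : ∀ n, u (n + 1) ≤ θ * u n + s n) (hsum : Summable s) : Summable u := by
  refine summable_of_sum_range_le (c := (u 0 + ∑' n, s n) / (1 - θ)) hu fun n => ?_
  rw [le_div_iff₀ (sub_pos.2 hθ)]
  have htsum : ∑ k ∈ Finset.range n, s k ≤ ∑' n, s n := hsum.sum_le_tsum _ fun k _ => hs k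
  have hshift : ∑ k ∈ Finset.range n, u (k + 1) ≤
      θ * ∑ k ∈ Finset.range n, u k + ∑ k ∈ Finset.range n, s k := by
    rw [Finset.mul_sum, ← Finset.sum_add_distrib]
    exact Finset.sum_le_sum fun k _ => h k
  have hhead : ∑ k ∈ Finset.range n, u k ≤ ∑ k ∈ Finset.range n, u (k + 1) + u 0 := by
    rw [← Finset.sum_range_succ', Finset.sum_range_succ]
    exact le_add_of_nonneg_right (hu n)
  linarith

open Classical in
lemma summable_of_le_mul_sum_ge {α : Type*} [PartialOrder α] [Fintype α]
    {u : ℕ → α → ℝ} {θ : ℝ} (hu : ∀ n a, 0 ≤ u n a) (hθ₀ : 0 ≤ θ) (hθ : θ < 1)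
    (h : ∀ n a, u (n + 1) a ≤ θ * ∑ b with a ≤ b, u n b) (a : α) :
    Summable fun n => u n a := by
  induction a using WellFoundedGT.induction with
  | _ a ih =>
  refine summable_of_le_mul_add (s := fun n => θ * ∑ b with a < b, u n b)
    (fun n => hu n a) (fun n => mul_nonneg hθ₀ (Finset.sum_nonneg fun b _ => hu n b)) hθ
    (fun n => ?_) (Summable.mul_left _ (summable_sum fun b hb => ih b (Finset.mem_filter.1 hb).2))
  have hinsert : Finset.univ.filter (a ≤ ·) = insert a (Finset.univ.filter (a < ·)) := by
    ext b
    simp [le_iff_eq_or_lt, eq_comm]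
  refine (h n a).trans_eq ?_
  rw [hinsert, Finset.sum_insert (by simp), mul_add]

end Summability

section JetStages

variable {F B g : Type*} [Field F] [Ring B] [Algebra F B] [AddCommGroup g] [Module F g]
  (β : g →ₗ[F] B) (α : Subalgebra F B → ℕ) {n : ℕ}

/-- The series with coefficients `β (ξ 0), β (ξ 1), …` attached to a jet `ξ` of length `n`. -/
noncomputable def jetSeries (ξ : Fin n → g) : PowerSeries B := finSeries fun k => β (ξ k)

/-- The last stage of the series attached to a jet. -/
noncomputable def jetStage (ξ : Fin n → g) : Subalgebra F B := stage F (jetSeries β ξ) n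

/-- The total weight of the stages of the series attached to a jet. -/
noncomputable def jetWeight (ξ : Fin n → g) : ℕ :=
  ∑ k ∈ Finset.range n, α (stage F (jetSeries β ξ) (k + 1))

lemma jetSeries_cons (c : g) (ξ : Fin n → g) :
    jetSeries β (Fin.cons c ξ : Fin (n + 1) → g) =
      PowerSeries.C (β c) + PowerSeries.X * jetSeries β ξ := by
  rw [jetSeries, jetSeries, ← finSeries_cons]
  congr 1
  ext1 k
  exact Fin.cases rfl (fun _ => rfl) k

lemma jetSeries_snoc (ξ : Fin n → g) (η : g) :
    jetSeries β (Fin.snoc ξ η : Fin (n + 1) → g) =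
      finSeries (Fin.snoc (fun k => β (ξ k)) (β η) : Fin (n + 1) → B) := by
  rw [jetSeries]
  congr 1
  ext1 k
  exact Fin.lastCases (by simp) (fun k => by simp) k

lemma X_pow_dvd_jetSeries_snoc_sub (ξ : Fin n → g) (η : g) :
    PowerSeries.X ^ n ∣ jetSeries β (Fin.snoc ξ η : Fin (n + 1) → g) - jetSeries β ξ := by
  rw [jetSeries_snoc]
  exact X_pow_dvd_finSeries_snoc_sub _ _

lemma stage_jetSeries_snoc {k : ℕ} (hk : k ≤ n) (ξ : Fin n → g) (η : g) :
    stage F (jetSeries β (Fin.snoc ξ η : Fin (n + 1) → g)) k = stage F (jetSeries β ξ) k :=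
  stage_eq_stage_of_X_pow_dvd_sub
    ((pow_dvd_pow _ hk).trans (X_pow_dvd_jetSeries_snoc_sub β ξ η))

lemma jetStage_snoc_le (ξ : Fin n → g) (η : g) :
    jetStage β (Fin.snoc ξ η : Fin (n + 1) → g) ≤ jetStage β ξ :=
  (stage_antitone _ n.le_succ).trans_eq (stage_jetSeries_snoc β le_rfl ξ η)

lemma jetWeight_snoc (ξ : Fin n → g) (η : g) :
    jetWeight β α (Fin.snoc ξ η : Fin (n + 1) → g) =
      jetWeight β α ξ + α (jetStage β (Fin.snoc ξ η : Fin (n + 1) → g)) := by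
  rw [jetWeight, Finset.sum_range_succ, jetWeight, jetStage]
  congr 1
  refine Finset.sum_congr rfl fun k hk => ?_
  rw [stage_jetSeries_snoc β (Finset.mem_range.1 hk)]

lemma jetWeight_cons_of_mem_bot (ξ : Fin n → g) {c : g} (hc : β c ∈ (⊥ : Subalgebra F B)) :
    jetWeight β α (Fin.cons c ξ : Fin (n + 1) → g) = α ⊤ + jetWeight β α ξ := by
  obtain ⟨z, hz⟩ := Algebra.mem_bot.1 hc
  have hstage (k : ℕ) : stage F (jetSeries β (Fin.cons c ξ : Fin (n + 1) → g)) (k + 1) =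
      stage F (jetSeries β ξ) k := by
    rw [jetSeries_cons, ← hz, ← PowerSeries.algebraMap_apply, stage_succ_algebraMap_add_X_mul]
  simp only [jetWeight, hstage]
  rw [Finset.sum_range_succ', stage_zero, add_comm]

end JetStages

section StageFibres

variable {F I g : Type*} [Field F] [Fintype I] [DecidableEq I] [AddCommGroup g] [Module F g]
  {n : ℕ}

lemma sub_mem_ker_commPairing_of_jetStage_snoc_eq (β : g →ₗ[F] Matrix I I F) (ξ : Fin n → g)
    {η η' : g} (h : jetStage β (Fin.snoc ξ η : Fin (n + 1) → g) =
      jetStage β (Fin.snoc ξ η' : Fin (n + 1) → g)) :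
    η - η' ∈ LinearMap.ker
      (commPairing β (jetStage β (Fin.snoc ξ η : Fin (n + 1) → g))) := by
  refine mem_ker_commPairing fun a ha b hb => ?_
  have hdvd := dvd_sub (X_pow_dvd_jetSeries_snoc_sub β ξ η) (X_pow_dvd_jetSeries_snoc_sub β ξ η')
  rw [sub_sub_sub_cancel_right] at hdvd
  have htrace := map_sub_mul_commutator_eq_zero_of_mem_stage (F := F)
    (τ := Matrix.traceAddMonoidHom I F) Matrix.trace_mul_comm hdvd (h.le ha) hb
  rwa [jetSeries_snoc, jetSeries_snoc, coeff_finSeries_snoc, coeff_finSeries_snoc,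
    ← map_sub] at htrace

open Classical in
lemma card_jetStage_snoc_eq_le [Fintype F] [Fintype g] (β : g →ₗ[F] Matrix I I F)
    (ξ : Fin n → g) (A : Subalgebra F (Matrix I I F)) :
    Finset.card {η | jetStage β (Fin.snoc ξ η : Fin (n + 1) → g) = A} ≤
      Fintype.card F ^ finrank F (LinearMap.ker (commPairing β A)) := by
  rcases Finset.eq_empty_or_nonempty
    {η | jetStage β (Fin.snoc ξ η : Fin (n + 1) → g) = A} with hempty | ⟨η₀, hη₀⟩
  · rw [hempty, Finset.card_empty]
    exact Nat.zero_le _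
  rw [← Module.card_eq_pow_finrank, Fintype.card_subtype]
  refine Finset.card_le_card_of_injOn (· - η₀) (fun η hη => ?_) sub_left_injective.injOn
  obtain rfl := (Finset.mem_filter.1 hη).2
  replace hη₀ := (Finset.mem_filter.1 hη₀).2
  refine Finset.mem_coe.2 (Finset.mem_filter.2 ⟨Finset.mem_univ _, ?_⟩)
  exact sub_mem_ker_commPairing_of_jetStage_snoc_eq β ξ hη₀.symm

end StageFibres

section JetSums

lemma sum_fin_cons {g M : Type*} [Fintype g] [AddCommMonoid M] {n : ℕ}
    (f : (Fin (n + 1) → g) → M) :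
    ∑ ξ, f ξ = ∑ c : g, ∑ ξ : Fin n → g, f (Fin.cons c ξ : Fin (n + 1) → g) := by
  rw [← (Fin.consEquiv fun _ : Fin (n + 1) => g).sum_comp, Fintype.sum_prod_type]
  rfl

lemma sum_fin_snoc {g M : Type*} [Fintype g] [AddCommMonoid M] {n : ℕ}
    (f : (Fin (n + 1) → g) → M) :
    ∑ ξ, f ξ = ∑ ξ : Fin n → g, ∑ η : g, f (Fin.snoc ξ η : Fin (n + 1) → g) := by
  rw [← (Fin.snocEquiv fun _ : Fin (n + 1) => g).sum_comp, Fintype.sum_prod_type_right]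
  rfl

variable {F B g : Type*} [Field F] [Ring B] [Algebra F B] [AddCommGroup g] [Module F g]
  [Fintype g]

/-- The sum of `q ^ jetWeight β α ξ` over all jets `ξ` of length `n`. -/
noncomputable def jetSum (q : ℝ) (β : g →ₗ[F] B) (α : Subalgebra F B → ℕ) (n : ℕ) : ℝ :=
  ∑ ξ : Fin n → g, q ^ jetWeight β α ξ

open Classical in
/-- The part of `jetSum q β α (n + 1)` coming from the jets with nonscalar first term and last
stage `A`. -/
noncomputable def stageSum (q : ℝ) (β : g →ₗ[F] B) (α : Subalgebra F B → ℕ) (n : ℕ)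
    (A : Subalgebra F B) : ℝ :=
  ∑ ξ : Fin (n + 1) → g with β (ξ 0) ∉ (⊥ : Subalgebra F B) ∧ jetStage β ξ = A,
    q ^ jetWeight β α ξ

variable {q : ℝ} {β : g →ₗ[F] B} {α : Subalgebra F B → ℕ}

lemma stageSum_nonneg (hq : 0 ≤ q) (n : ℕ) (A : Subalgebra F B) : 0 ≤ stageSum q β α n A :=
  Finset.sum_nonneg fun _ _ => pow_nonneg hq _

open Classical in
lemma sum_stageSum_ge [Fintype (Subalgebra F B)] (n : ℕ) (A : Subalgebra F B) :
    ∑ A' with A ≤ A', stageSum q β α n A' =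
      ∑ ξ : Fin (n + 1) → g with β (ξ 0) ∉ (⊥ : Subalgebra F B) ∧ A ≤ jetStage β ξ,
        q ^ jetWeight β α ξ := by
  rw [← Finset.sum_fiberwise_of_maps_to (t := {A' | A ≤ A'}) (g := jetStage β) fun ξ hξ =>
    Finset.mem_filter.2 ⟨Finset.mem_univ _, (Finset.mem_filter.1 hξ).2.2⟩]
  refine Finset.sum_congr rfl fun A' hA' => ?_
  rw [stageSum, Finset.filter_filter]
  refine Finset.sum_congr (Finset.filter_congr fun ξ _ => ?_) fun _ _ => rfl
  rw [and_assoc]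
  exact and_congr_right fun _ => ⟨fun h => ⟨h ▸ (Finset.mem_filter.1 hA').2, h⟩, And.right⟩

open Classical in
lemma sum_jets_scalar_head (n : ℕ) :
    ∑ ξ : Fin (n + 1) → g with β (ξ 0) ∈ (⊥ : Subalgebra F B), q ^ jetWeight β α ξ =
      Finset.card {c | β c ∈ (⊥ : Subalgebra F B)} * q ^ α ⊤ * jetSum q β α n := by
  rw [Finset.sum_filter, sum_fin_cons, mul_assoc, ← nsmul_eq_mul, ← Finset.sum_const,
    Finset.sum_filter]
  refine Finset.sum_congr rfl fun c _ => ?_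
  simp only [Fin.cons_zero]
  split_ifs with hc
  · simp only [jetWeight_cons_of_mem_bot β α _ hc, pow_add, jetSum, Finset.mul_sum]
  · exact Finset.sum_const_zero

open Classical in
lemma jetSum_succ [Fintype (Subalgebra F B)] (n : ℕ) :
    jetSum q β α (n + 1) =
      Finset.card {c | β c ∈ (⊥ : Subalgebra F B)} * q ^ α ⊤ * jetSum q β α n +
        ∑ A, stageSum q β α n A := by
  have hnonscalar : ∑ A, stageSum q β α n A =
      ∑ ξ : Fin (n + 1) → g with β (ξ 0) ∉ (⊥ : Subalgebra F B), q ^ jetWeight β α ξ := by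
    simpa only [bot_le, Finset.filter_true, and_true] using
      sum_stageSum_ge (q := q) (β := β) (α := α) n ⊥
  rw [hnonscalar, ← sum_jets_scalar_head, Finset.sum_filter_add_sum_filter_not, jetSum]

open Classical in
lemma stageSum_succ_eq (n : ℕ) (A : Subalgebra F B) :
    stageSum q β α (n + 1) A =
      ∑ ξ : Fin (n + 1) → g with β (ξ 0) ∉ (⊥ : Subalgebra F B),
        Finset.card {η | jetStage β (Fin.snoc ξ η : Fin (n + 1 + 1) → g) = A} * q ^ α A *
          q ^ jetWeight β α ξ := by
  have hhead (ξ : Fin (n + 1) → g) (η : g) : (Fin.snoc ξ η : Fin (n + 1 + 1) → g) 0 = ξ 0 :=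
    Fin.snoc_castSucc (α := fun _ => g) η ξ 0
  rw [stageSum, Finset.sum_filter, sum_fin_snoc, Finset.sum_filter]
  refine Finset.sum_congr rfl fun ξ _ => ?_
  simp only [hhead, ite_and, jetWeight_snoc]
  split_ifs with hξ
  · exact Finset.sum_const_zero
  · rw [← Finset.sum_filter, mul_assoc, ← nsmul_eq_mul]
    refine Finset.sum_eq_card_nsmul fun η hη => ?_
    rw [(Finset.mem_filter.1 hη).2, pow_add, mul_comm]

open Classical in
lemma stageSum_succ_le [Fintype (Subalgebra F B)] (hq : 0 ≤ q) {E n : ℕ} {A : Subalgebra F B}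
    (hcount : ∀ ξ : Fin (n + 1) → g, β (ξ 0) ∉ (⊥ : Subalgebra F B) →
      Finset.card {η | jetStage β (Fin.snoc ξ η : Fin (n + 1 + 1) → g) = A} * q ^ α A ≤ q ^ E) :
    stageSum q β α (n + 1) A ≤ q ^ E * ∑ A' with A ≤ A', stageSum q β α n A' := by
  rw [stageSum_succ_eq, sum_stageSum_ge, Finset.mul_sum, ← Finset.filter_filter,
    Finset.sum_filter (s := Finset.filter _ _)]
  refine Finset.sum_le_sum fun ξ hξ => ?_
  split_ifs with hA
  · exact mul_le_mul_of_nonneg_right (hcount ξ (Finset.mem_filter.1 hξ).2) (pow_nonneg hq _)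
  · have hempty : Finset.univ.filter
        (fun η => jetStage β (Fin.snoc ξ η : Fin (n + 1 + 1) → g) = A) = ∅ :=
      Finset.filter_eq_empty_iff.2 fun η _ h => hA (h ▸ jetStage_snoc_le β ξ η)
    rw [hempty, Finset.card_empty, Nat.cast_zero, zero_mul, zero_mul]

open Classical in
lemma exists_tendsto_jetSum_div [Finite (Subalgebra F B)] (hq : 1 < q)
    (hscalar : (Finset.card {c | β c ∈ (⊥ : Subalgebra F B)} : ℝ) = q)
    (hcount : ∀ (n : ℕ) (ξ : Fin (n + 1) → g) (A : Subalgebra F B),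
      β (ξ 0) ∉ (⊥ : Subalgebra F B) →
      Finset.card {η | jetStage β (Fin.snoc ξ η : Fin (n + 1 + 1) → g) = A} * q ^ α A ≤
        q ^ α ⊤) :
    ∃ L : ℝ, Filter.Tendsto (fun n => jetSum q β α n / (q ^ (α ⊤ + 1)) ^ n)
      Filter.atTop (nhds L) := by
  have := Fintype.ofFinite (Subalgebra F B)
  have hq₀ : 0 < q := one_pos.trans hq
  set Q := q ^ (α ⊤ + 1) with hQ
  have hQ₀ : 0 < Q := pow_pos hq₀ _
  -- Normalised by `Q ^ n`, the stage sums are contracted by the factor `q⁻¹`.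
  have hsum : ∀ A, Summable fun n => stageSum q β α n A / Q ^ n := by
    refine summable_of_le_mul_sum_ge (θ := q⁻¹) (u := fun n A => stageSum q β α n A / Q ^ n)
      (fun n A => div_nonneg (stageSum_nonneg hq₀.le _ _) (pow_nonneg hQ₀.le _))
      (inv_nonneg.2 hq₀.le) (inv_lt_one_of_one_lt₀ hq) fun n A => ?_
    rw [← Finset.sum_div, div_le_iff₀ (pow_pos hQ₀ _)]
    refine (stageSum_succ_le hq₀.le fun ξ => hcount n ξ A).trans_eq ?_
    rw [pow_succ Q n, hQ]
    field_simp
    ring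
  have hstep (n : ℕ) : jetSum q β α (n + 1) / Q ^ (n + 1) - jetSum q β α n / Q ^ n =
      (∑ A, stageSum q β α n A / Q ^ n) / Q := by
    rw [jetSum_succ, hscalar, ← pow_succ', ← hQ, ← Finset.sum_div, pow_succ Q n]
    field_simp
    ring
  have hpartial := ((summable_sum (s := Finset.univ) fun A _ => hsum A).div_const
    Q).hasSum.tendsto_sum_nat
  simp only [← hstep, Finset.sum_range_sub (fun n => jetSum q β α n / Q ^ n)] at hpartial
  have hlim := hpartial.add_const (jetSum q β α 0 / Q ^ 0)
  simp only [sub_add_cancel] at hlim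
  exact ⟨_, hlim⟩

end JetSums

/-! ### Truncated polynomial rings -/

section TruncRing

variable {F : Type} [Field F] {n k : ℕ}

/-- The coefficient of `t ^ k` of an element of `F[t]/(t^n)`, zero for `n ≤ k`. -/
noncomputable def truncCoeff (F : Type) [Field F] (n k : ℕ) : TruncRing F n →ₗ[F] F :=
  Polynomial.lcoeff F k ∘ₗ AdjoinRoot.modByMonicHom (Polynomial.monic_X_pow n)

lemma truncCoeff_mk_eq_coeff_modByMonic (p : Polynomial F) :
    truncCoeff F n k (Ideal.Quotient.mk _ p) = (p %ₘ Polynomial.X ^ n).coeff k :=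
  congrArg (Polynomial.coeff · k) (AdjoinRoot.modByMonicHom_mk (Polynomial.monic_X_pow n) p)

lemma truncCoeff_mk (hk : k < n) (p : Polynomial F) :
    truncCoeff F n k (Ideal.Quotient.mk _ p) = p.coeff k := by
  rw [truncCoeff_mk_eq_coeff_modByMonic]
  have hdvd : Polynomial.X ^ n ∣ p - p %ₘ Polynomial.X ^ n := by
    rw [Polynomial.modByMonic_eq_sub_mul_div, sub_sub_cancel]
    exact dvd_mul_right _ _
  have hcoeff := Polynomial.X_pow_dvd_iff.1 hdvd k hk
  rw [Polynomial.coeff_sub, sub_eq_zero] at hcoeff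
  exact hcoeff.symm

lemma truncCoeff_of_le (hk : n ≤ k) : truncCoeff F n k = 0 := by
  refine LinearMap.ext fun x => ?_
  obtain ⟨p, rfl⟩ := Ideal.Quotient.mk_surjective x
  refine (truncCoeff_mk_eq_coeff_modByMonic p).trans <| Polynomial.coeff_eq_zero_of_degree_lt
    ((Polynomial.degree_modByMonic_lt p (Polynomial.monic_X_pow n)).trans_le ?_)
  rw [Polynomial.degree_X_pow]
  exact_mod_cast hk

lemma truncCoeff_mul (hk : k < n) (x y : TruncRing F n) :
    truncCoeff F n k (x * y) = ∑ p ∈ Finset.HasAntidiagonal.antidiagonal k,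
      truncCoeff F n p.1 x * truncCoeff F n p.2 y := by
  obtain ⟨x, rfl⟩ := Ideal.Quotient.mk_surjective x
  obtain ⟨y, rfl⟩ := Ideal.Quotient.mk_surjective y
  rw [← map_mul, truncCoeff_mk hk, Polynomial.coeff_mul]
  refine Finset.sum_congr rfl fun p hp => ?_
  rw [truncCoeff_mk ((Finset.HasAntidiagonal.antidiagonal.fst_le hp).trans_lt hk),
    truncCoeff_mk ((Finset.HasAntidiagonal.antidiagonal.snd_le hp).trans_lt hk)]

lemma eq_zero_of_truncCoeff_eq_zero {x : TruncRing F n} (h : ∀ k < n, truncCoeff F n k x = 0) :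
    x = 0 := by
  obtain ⟨p, rfl⟩ := Ideal.Quotient.mk_surjective x
  rw [Ideal.Quotient.eq_zero_iff_dvd, Polynomial.X_pow_dvd_iff]
  exact fun k hk => (truncCoeff_mk hk p).symm.trans (h k hk)

lemma eq_zero_of_forall_truncCoeff_mul_eq_zero {x : TruncRing F (n + 1)}
    (h : ∀ y, truncCoeff F (n + 1) n (x * y) = 0) : x = 0 := by
  refine eq_zero_of_truncCoeff_eq_zero fun k hk => ?_
  obtain ⟨p, rfl⟩ := Ideal.Quotient.mk_surjective x
  have hshift := h (Ideal.Quotient.mk _ (Polynomial.X ^ (n - k)))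
  have hkn := Nat.lt_succ_iff.1 hk
  rwa [← map_mul, truncCoeff_mk n.lt_succ_self, Polynomial.coeff_mul_X_pow',
    if_pos (Nat.sub_le _ _), Nat.sub_sub_self hkn, ← truncCoeff_mk hk] at hshift

/-- The isomorphism `F[t]/(t^n) ≃ Fⁿ` given by the coefficients. -/
noncomputable def truncEquiv (F : Type) [Field F] (n : ℕ) : TruncRing F n ≃ₗ[F] (Fin n → F) :=
  LinearEquiv.ofBijective (LinearMap.pi fun k : Fin n => truncCoeff F n k) <| by
    refine ⟨(injective_iff_map_eq_zero _).2 fun x hx =>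
      eq_zero_of_truncCoeff_eq_zero fun k hk => congrFun hx ⟨k, hk⟩, fun v => ?_⟩
    refine ⟨Ideal.Quotient.mk _ (∑ k : Fin n, Polynomial.monomial (k : ℕ) (v k)), ?_⟩
    ext k
    rw [LinearMap.pi_apply, truncCoeff_mk k.2, Polynomial.finsetSum_coeff]
    simp only [Polynomial.coeff_monomial, Fin.val_inj, Finset.sum_ite_eq', Finset.mem_univ,
      if_true]

instance truncRing_finite [Finite F] : Finite (TruncRing F n) :=
  Finite.of_equiv _ (truncEquiv F n).symm.toEquiv

instance truncRing_finiteDimensional : FiniteDimensional F (TruncRing F n) :=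
  Module.Finite.equiv (truncEquiv F n).symm

lemma finrank_truncRing (F : Type) [Field F] (n : ℕ) : finrank F (TruncRing F n) = n := by
  rw [(truncEquiv F n).finrank_eq, finrank_fin_fun]

end TruncRing

section CoeffMat

variable {F : Type} [Field F] {l m r : Type*} {n k : ℕ}

/-- The matrix of the coefficients of `t ^ k` of the entries. -/
noncomputable def coeffMat (n k : ℕ) : Matrix l m (TruncRing F n) →ₗ[F] Matrix l m F :=
  (truncCoeff F n k).mapMatrix

lemma coeffMat_apply (x : Matrix l m (TruncRing F n)) (a : l) (b : m) :
    coeffMat n k x a b = truncCoeff F n k (x a b) := rfl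

lemma coeffMat_of_le (hk : n ≤ k) (x : Matrix l m (TruncRing F n)) : coeffMat n k x = 0 := by
  ext
  rw [coeffMat_apply, truncCoeff_of_le hk]
  rfl

lemma coeffMat_mul [Fintype m] (hk : k < n) (x : Matrix l m (TruncRing F n))
    (y : Matrix m r (TruncRing F n)) :
    coeffMat n k (x * y) = ∑ p ∈ Finset.HasAntidiagonal.antidiagonal k,
      coeffMat n p.1 x * coeffMat n p.2 y := by
  ext a b
  rw [coeffMat_apply, Matrix.mul_apply, map_sum, Matrix.sum_apply]
  simp only [truncCoeff_mul hk, Matrix.mul_apply, coeffMat_apply]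
  rw [Finset.sum_comm]

lemma coeffMat_ext {x y : Matrix l m (TruncRing F n)}
    (h : ∀ k < n, coeffMat n k x = coeffMat n k y) : x = y := by
  ext a b
  rw [← sub_eq_zero]
  refine eq_zero_of_truncCoeff_eq_zero fun k hk => ?_
  rw [map_sub, sub_eq_zero]
  exact congrFun₂ (h k hk) a b

lemma exists_coeffMat_eq (v : Fin n → Matrix l m F) :
    ∃ x : Matrix l m (TruncRing F n), ∀ k : Fin n, coeffMat n k x = v k :=
  ⟨Matrix.of fun a b => (truncEquiv F n).symm fun k => v k a b, fun k => by
    ext a b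
    exact congrFun ((truncEquiv F n).apply_symm_apply fun k => v k a b) k⟩

end CoeffMat

/-! ### Adjoint maps with respect to nondegenerate pairings -/

section Duality

variable {F X X' Y Y' : Type*} [Field F] [AddCommGroup X] [Module F X] [AddCommGroup X']
  [Module F X'] [AddCommGroup Y] [Module F Y] [AddCommGroup Y'] [Module F Y']
  {p : X' →ₗ[F] X →ₗ[F] F} {r : Y' →ₗ[F] Y →ₗ[F] F} {f : X →ₗ[F] Y} {f' : Y' →ₗ[F] X'}

lemma finrank_range_eq_of_adjoint [FiniteDimensional F Y] [FiniteDimensional F Y']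
    (hp : p.SeparatingLeft) (hr : r.SeparatingRight) (hadj : ∀ y' x, r y' (f x) = p (f' y') x) :
    finrank F (LinearMap.range f) = finrank F (LinearMap.range f') := by
  have hr_surj : Function.Surjective r :=
    LinearMap.flip_injective_iff₁.1
      (LinearMap.ker_eq_bot.1 (LinearMap.separatingRight_iff_flip_ker_eq_bot.1 hr))
  have hcomp : f.dualMap ∘ₗ r = p ∘ₗ f' := LinearMap.ext₂ hadj
  rw [← LinearMap.finrank_range_dualMap_eq_finrank_range,
    ← LinearMap.range_comp_of_range_eq_top f.dualMap (LinearMap.range_eq_top.2 hr_surj), hcomp,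
    LinearMap.range_comp]
  exact (Submodule.equivMapOfInjective p
    (LinearMap.ker_eq_bot.1 (LinearMap.separatingLeft_iff_ker_eq_bot.1 hp)) _).finrank_eq.symm

lemma finrank_ker_add_finrank_of_adjoint [FiniteDimensional F X] [FiniteDimensional F Y]
    [FiniteDimensional F Y'] (hp : p.SeparatingLeft) (hr : r.SeparatingRight)
    (hadj : ∀ y' x, r y' (f x) = p (f' y') x) :
    finrank F (LinearMap.ker f) + finrank F Y' = finrank F X + finrank F (LinearMap.ker f') := by
  rw [← f.finrank_range_add_finrank_ker, ← f'.finrank_range_add_finrank_ker,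
    finrank_range_eq_of_adjoint hp hr hadj]
  ring

end Duality

/-! ### Block embeddings -/

section BlockEmbed

variable {F : Type*} [Field F] {V : Type*} [DecidableEq V] [Fintype V] {d : V → ℕ}

/-- The inclusion of the coordinates of colour `j`. -/
def inclMat (F : Type*) [Field F] {V : Type*} [DecidableEq V] (d : V → ℕ) (j : V) :
    Matrix (Σ i, Fin (d i)) (Fin (d j)) F :=
  (1 : Matrix (Σ i, Fin (d i)) (Σ i, Fin (d i)) F).submatrix id (fun b => ⟨j, b⟩)

omit [Fintype V] in
lemma inclMat_apply_self {j : V} (a b : Fin (d j)) :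
    inclMat F d j ⟨j, a⟩ b = if a = b then 1 else 0 := by
  simp only [inclMat, Matrix.submatrix_apply, id_eq, Matrix.one_apply, Sigma.mk.inj_iff,
    heq_eq_eq, true_and]

omit [Fintype V] in
lemma inclMat_apply_of_ne {i j : V} (h : i ≠ j) (a : Fin (d i)) (b : Fin (d j)) :
    inclMat F d j ⟨i, a⟩ b = 0 :=
  Matrix.one_apply_ne (i := (⟨i, a⟩ : Σ i, Fin (d i))) (j := ⟨j, b⟩)
    fun hab => h (congrArg Sigma.fst hab)

lemma mul_inclMat {l : Type*} (m : Matrix l (Σ i, Fin (d i)) F) (j : V) :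
    m * inclMat F d j = m.submatrix id (fun b => ⟨j, b⟩) :=
  Matrix.mul_submatrix_one (Equiv.refl _) (fun b => ⟨j, b⟩) m

lemma transpose_inclMat_mul_inclMat (j : V) :
    (inclMat F d j).transpose * inclMat F d j = 1 := by
  rw [mul_inclMat, inclMat, Matrix.transpose_submatrix, Matrix.submatrix_submatrix,
    Matrix.transpose_one]
  exact Matrix.submatrix_one (fun b : Fin (d j) => (⟨j, b⟩ : Σ i, Fin (d i)))
    (sigma_mk_injective (β := fun i => Fin (d i)))

omit [Fintype V] in
lemma inclMat_mul_transpose (j : V) :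
    inclMat F d j * (inclMat F d j).transpose = colorIdem F Sigma.fst j := by
  ext ⟨a, a'⟩ ⟨b, b'⟩
  rw [Matrix.mul_apply, colorIdem, Matrix.diagonal_apply]
  obtain rfl | h := eq_or_ne a j
  · simp only [Matrix.transpose_apply, inclMat_apply_self, ite_mul, one_mul, zero_mul,
      Finset.sum_ite_eq, Finset.mem_univ, if_true]
    exact if_congr eq_comm rfl rfl
  · simp only [inclMat_apply_of_ne h, zero_mul, Finset.sum_const_zero, h, if_false, ite_self]

/-- The inclusion of block diagonal matrices. -/
def blockDiagonalMap (F : Type*) [Field F] {V : Type*} [DecidableEq V] (d : V → ℕ) :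
    (∀ i, Matrix (Fin (d i)) (Fin (d i)) F) →ₗ[F]
      Matrix (Σ i, Fin (d i)) (Σ i, Fin (d i)) F where
  toFun ξ := Matrix.blockDiagonal' ξ
  map_add' := Matrix.blockDiagonal'_add
  map_smul' := Matrix.blockDiagonal'_smul

omit [Fintype V] in
lemma blockDiagonalMap_injective : Function.Injective (blockDiagonalMap F d) :=
  Matrix.blockDiagonal'_injective

lemma blockDiagonalMap_algebraMap (z : F) :
    blockDiagonalMap F d (fun _ => algebraMap F _ z) = algebraMap F _ z := by
  simp only [Algebra.algebraMap_eq_smul_one]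
  exact ((blockDiagonalMap F d).map_smul z 1).trans
    (congrArg (z • ·) Matrix.blockDiagonal'_one)

lemma blockDiagonalMap_mul_inclMat (ξ : ∀ i, Matrix (Fin (d i)) (Fin (d i)) F)
    (j : V) : blockDiagonalMap F d ξ * inclMat F d j = inclMat F d j * ξ j := by
  rw [mul_inclMat]
  ext ⟨a, a'⟩ b
  rw [Matrix.mul_apply]
  obtain rfl | h := eq_or_ne a j
  · simp only [inclMat_apply_self, ite_mul, one_mul, zero_mul, Finset.sum_ite_eq,
      Finset.mem_univ, if_true]
    exact Matrix.blockDiagonal'_apply_eq ξ a a' b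
  · simp only [inclMat_apply_of_ne h, zero_mul, Finset.sum_const_zero]
    exact Matrix.blockDiagonal'_apply_ne ξ a' b h

lemma transpose_inclMat_mul_blockDiagonalMap
    (ξ : ∀ i, Matrix (Fin (d i)) (Fin (d i)) F) (j : V) :
    (inclMat F d j).transpose * blockDiagonalMap F d ξ = ξ j * (inclMat F d j).transpose := by
  have h := congrArg Matrix.transpose
    (blockDiagonalMap_mul_inclMat (fun i => (ξ i).transpose) j)
  rw [Matrix.transpose_mul, Matrix.transpose_mul, Matrix.transpose_transpose] at h
  exact (congrArg (_ * ·) (Matrix.blockDiagonal'_transpose fun i => (ξ i).transpose)).symm.trans h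

lemma commute_colorIdem_blockDiagonalMap (j : V)
    (ξ : ∀ i, Matrix (Fin (d i)) (Fin (d i)) F) :
    Commute (colorIdem F Sigma.fst j) (blockDiagonalMap F d ξ) := by
  rw [commute_iff_eq, ← inclMat_mul_transpose, ← Matrix.mul_assoc, blockDiagonalMap_mul_inclMat,
    Matrix.mul_assoc, transpose_inclMat_mul_blockDiagonalMap, Matrix.mul_assoc]

/-- The embedding of rectangular matrices as matrices supported on the block `(j, i)`. -/
noncomputable def blockEmbed (F : Type*) [Field F] {V : Type*} [DecidableEq V] (d : V → ℕ)
    (j i : V) : Matrix (Fin (d j)) (Fin (d i)) F →ₗ[F]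
      Matrix (Σ i, Fin (d i)) (Σ i, Fin (d i)) F :=
  mulRightLinearMap _ F (inclMat F d i).transpose ∘ₗ
    mulLeftLinearMap _ F (inclMat F d j)

omit [Fintype V] in
lemma blockEmbed_apply (j i : V) (x : Matrix (Fin (d j)) (Fin (d i)) F) :
    blockEmbed F d j i x = inclMat F d j * x * (inclMat F d i).transpose := rfl

omit [Fintype V] in
lemma blockEmbed_injective [Finite V] (j i : V) : Function.Injective (blockEmbed F d j i) := by
  have := Fintype.ofFinite V
  refine Function.LeftInverse.injective
    (g := fun z => (inclMat F d j).transpose * z * inclMat F d i) fun x => ?_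
  simp only [blockEmbed_apply, Matrix.mul_assoc, transpose_inclMat_mul_inclMat, Matrix.mul_one]
  rw [← Matrix.mul_assoc, transpose_inclMat_mul_inclMat, Matrix.one_mul]

lemma blockEmbed_transpose_inclMat_mul_mul (j i : V)
    (z : Matrix (Σ i, Fin (d i)) (Σ i, Fin (d i)) F) :
    blockEmbed F d j i ((inclMat F d j).transpose * z * inclMat F d i) =
      colorIdem F Sigma.fst j * z * colorIdem F Sigma.fst i := by
  simp only [blockEmbed_apply, ← inclMat_mul_transpose, Matrix.mul_assoc]

lemma colorIdem_mul_blockEmbed_mul (j i : V) (x : Matrix (Fin (d j)) (Fin (d i)) F) :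
    colorIdem F Sigma.fst j * blockEmbed F d j i x * colorIdem F Sigma.fst i =
      blockEmbed F d j i x := by
  simp only [blockEmbed_apply, ← inclMat_mul_transpose, Matrix.mul_assoc]
  rw [← Matrix.mul_assoc _ (inclMat F d j), transpose_inclMat_mul_inclMat, Matrix.one_mul,
    ← Matrix.mul_assoc _ (inclMat F d i), transpose_inclMat_mul_inclMat, Matrix.one_mul]

lemma blockDiagonalMap_mul_blockEmbed (ξ : ∀ i, Matrix (Fin (d i)) (Fin (d i)) F) (j i : V)
    (x : Matrix (Fin (d j)) (Fin (d i)) F) :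
    blockDiagonalMap F d ξ * blockEmbed F d j i x = blockEmbed F d j i (ξ j * x) := by
  simp only [blockEmbed_apply, ← Matrix.mul_assoc, blockDiagonalMap_mul_inclMat]

lemma blockEmbed_mul_blockDiagonalMap (ξ : ∀ i, Matrix (Fin (d i)) (Fin (d i)) F) (j i : V)
    (x : Matrix (Fin (d j)) (Fin (d i)) F) :
    blockEmbed F d j i x * blockDiagonalMap F d ξ = blockEmbed F d j i (x * ξ i) := by
  simp only [blockEmbed_apply, Matrix.mul_assoc, transpose_inclMat_mul_blockDiagonalMap]

lemma range_blockEmbed (j i : V) :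
    LinearMap.range (blockEmbed F d j i) = matBlock Sigma.fst ⊤ i j := by
  refine le_antisymm ?_ ?_
  · rintro _ ⟨x, rfl⟩
    exact ⟨_, Algebra.mem_top (R := F), colorIdem_mul_blockEmbed_mul j i x⟩
  · rintro _ ⟨z, -, rfl⟩
    exact ⟨_, blockEmbed_transpose_inclMat_mul_mul j i z⟩

lemma finrank_matBlock_top (F : Type*) [Field F] (d : V → ℕ) (i j : V) :
    finrank F (matBlock Sigma.fst (⊤ : Subalgebra F
      (Matrix (Σ i, Fin (d i)) (Σ i, Fin (d i)) F)) i j) = d i * d j := by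
  rw [← range_blockEmbed, LinearMap.finrank_range_of_inj (blockEmbed_injective j i),
    finrank_matrix, finrank_self, mul_one, Fintype.card_fin, Fintype.card_fin, mul_comm]

omit [Fintype V] in
lemma blockDiagonalMap_single [Finite V] (i : V) (w : Matrix (Fin (d i)) (Fin (d i)) F) :
    blockDiagonalMap F d (Pi.single i w) = blockEmbed F d i i w := by
  have := Fintype.ofFinite V
  have hcolumn (j : V) : blockDiagonalMap F d (Pi.single i w) * colorIdem F Sigma.fst j =
      inclMat F d j * (Pi.single i w : ∀ i, Matrix (Fin (d i)) (Fin (d i)) F) j *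
        (inclMat F d j).transpose := by
    rw [← inclMat_mul_transpose, ← Matrix.mul_assoc, blockDiagonalMap_mul_inclMat]
  rw [← Matrix.mul_one (blockDiagonalMap F d _), ← sum_colorIdem Sigma.fst, Finset.mul_sum,
    Fintype.sum_eq_single i fun j hj => ?_, hcolumn, Pi.single_eq_same, blockEmbed_apply]
  rw [hcolumn, Pi.single_eq_of_ne hj, Matrix.mul_zero, Matrix.zero_mul]

lemma colorIdem_mul_mul_mem_range_blockDiagonalMap (i : V)
    (z : Matrix (Σ i, Fin (d i)) (Σ i, Fin (d i)) F) :
    colorIdem F Sigma.fst i * z * colorIdem F Sigma.fst i ∈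
      LinearMap.range (blockDiagonalMap F d) := by
  rw [← blockEmbed_transpose_inclMat_mul_mul, ← blockDiagonalMap_single]
  exact LinearMap.mem_range_self _ _

end BlockEmbed

/-! ### Intertwiners over truncated polynomial rings -/

section Intertwine

/-- The commutation defect `u y - y v` of a rectangular matrix `y`. -/
noncomputable def intertwine (F : Type*) {R l m : Type*} [Field F] [CommRing R] [Algebra F R]
    [Fintype l] [Fintype m] (u : Matrix l l R) (v : Matrix m m R) :
    Matrix l m R →ₗ[F] Matrix l m R :=
  mulLeftLinearMap m F u - mulRightLinearMap l F v

lemma intertwine_apply (F : Type*) {R l m : Type*} [Field F] [CommRing R] [Algebra F R]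
    [Fintype l] [Fintype m] (u : Matrix l l R) (v : Matrix m m R) (y : Matrix l m R) :
    intertwine F u v y = u * y - y * v := rfl

variable {F : Type} [Field F] {V : Type*} {d : V → ℕ} {n : ℕ}

/-- The sequence of coefficients of a family of square matrices over `F[t]/(t^n)`. -/
noncomputable def jets (ξ : ∀ i, Matrix (Fin (d i)) (Fin (d i)) (TruncRing F n)) :
    Fin n → ∀ i, Matrix (Fin (d i)) (Fin (d i)) F :=
  fun k i => coeffMat n k (ξ i)

lemma jets_bijective : Function.Bijective
    (jets : (∀ i, Matrix (Fin (d i)) (Fin (d i)) (TruncRing F n)) → _) := by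
  refine ⟨fun ξ ξ' h => funext fun i => coeffMat_ext fun k hk => congrFun₂ h ⟨k, hk⟩ i,
    fun v => ?_⟩
  choose ξ hξ using fun i => exists_coeffMat_eq fun k => v k i
  exact ⟨ξ, funext fun k => funext fun i => hξ i k⟩

variable [DecidableEq V] [Fintype V]

lemma coeff_jetSeries_jets (ξ : ∀ i, Matrix (Fin (d i)) (Fin (d i)) (TruncRing F n)) (k : ℕ) :
    PowerSeries.coeff k (jetSeries (blockDiagonalMap F d) (jets ξ)) =
      blockDiagonalMap F d fun i => coeffMat n k (ξ i) := by
  obtain hk | hk := lt_or_ge k n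
  · rw [jetSeries, coeff_finSeries_of_lt _ hk]
    rfl
  · have hzero : (fun i => coeffMat n k (ξ i)) = 0 := funext fun i => coeffMat_of_le hk _
    rw [jetSeries, coeff_finSeries_of_le _ hk, hzero, map_zero]

/-- The sequence of coefficients of a rectangular block, as matrices on all coordinates. -/
noncomputable def blockJets (F : Type) [Field F] {V : Type*} [DecidableEq V]
    (d : V → ℕ) (n : ℕ) (j i : V) :
    Matrix (Fin (d j)) (Fin (d i)) (TruncRing F n) →ₗ[F]
      (Fin n → Matrix (Σ i, Fin (d i)) (Σ i, Fin (d i)) F) :=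
  LinearMap.pi fun k => blockEmbed F d j i ∘ₗ coeffMat n k

omit [Fintype V] in
lemma blockJets_apply (j i : V) (x : Matrix (Fin (d j)) (Fin (d i)) (TruncRing F n))
    (k : Fin n) : blockJets F d n j i x k = blockEmbed F d j i (coeffMat n k x) := rfl

lemma coeff_finSeries_blockJets (j i : V)
    (x : Matrix (Fin (d j)) (Fin (d i)) (TruncRing F n)) (k : ℕ) :
    PowerSeries.coeff k (finSeries (blockJets F d n j i x)) =
      blockEmbed F d j i (coeffMat n k x) := by
  obtain hk | hk := lt_or_ge k n
  · rw [coeff_finSeries_of_lt _ hk, blockJets_apply]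
  · rw [coeff_finSeries_of_le _ hk, coeffMat_of_le hk, map_zero]

lemma commute_colorIdem_coeff_jetSeries (i : V)
    (ζ : Fin n → ∀ i, Matrix (Fin (d i)) (Fin (d i)) F) (k : ℕ) :
    Commute (colorIdem F Sigma.fst i)
      (PowerSeries.coeff k (jetSeries (blockDiagonalMap F d) ζ)) := by
  obtain ⟨ξ, rfl⟩ := jets_bijective.2 ζ
  rw [coeff_jetSeries_jets]
  exact commute_colorIdem_blockDiagonalMap i _

lemma colorIdem_mem_jetStage (ζ : Fin n → ∀ i, Matrix (Fin (d i)) (Fin (d i)) F) (i : V) :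
    colorIdem F Sigma.fst i ∈ jetStage (blockDiagonalMap F d) ζ :=
  mem_stage_of_forall_commute_coeff (commute_colorIdem_coeff_jetSeries i ζ) n

omit [Fintype V] in
lemma blockJets_injective [Finite V] (j i : V) : Function.Injective (blockJets F d n j i) :=
  fun _ _ h => coeffMat_ext fun k hk => blockEmbed_injective j i (congrFun h ⟨k, hk⟩)

lemma coeff_commutator_blockJets (ξ : ∀ i, Matrix (Fin (d i)) (Fin (d i)) (TruncRing F n))
    (j i : V) (x : Matrix (Fin (d j)) (Fin (d i)) (TruncRing F n)) {k : ℕ} (hk : k < n) :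
    PowerSeries.coeff k
        (jetSeries (blockDiagonalMap F d) (jets ξ) * finSeries (blockJets F d n j i x) -
          finSeries (blockJets F d n j i x) * jetSeries (blockDiagonalMap F d) (jets ξ)) =
      blockEmbed F d j i (coeffMat n k (intertwine F (ξ j) (ξ i) x)) := by
  rw [intertwine_apply, map_sub, map_sub, map_sub, PowerSeries.coeff_mul, PowerSeries.coeff_mul,
    coeffMat_mul hk, coeffMat_mul hk]
  simp only [coeff_jetSeries_jets, coeff_finSeries_blockJets, map_sum,
    blockDiagonalMap_mul_blockEmbed, blockEmbed_mul_blockDiagonalMap]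

lemma map_blockJets_ker_intertwine
    (ξ : ∀ i, Matrix (Fin (d i)) (Fin (d i)) (TruncRing F n)) (j i : V) :
    (LinearMap.ker (intertwine F (ξ j) (ξ i))).map (blockJets F d n j i) =
      commutingJets F (jetSeries (blockDiagonalMap F d) (jets ξ)) (colorIdem F Sigma.fst j)
        (colorIdem F Sigma.fst i) n := by
  refine le_antisymm ?_ ?_
  · rintro _ ⟨x, hx, rfl⟩
    refine ⟨fun k => colorIdem_mul_blockEmbed_mul j i _,
      PowerSeries.X_pow_dvd_iff.2 fun k hk => ?_⟩
    rw [coeff_commutator_blockJets ξ j i x hk, LinearMap.mem_ker.1 hx, map_zero, map_zero]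
  · rintro y ⟨hblock, hcomm⟩
    obtain ⟨x, hx⟩ := exists_coeffMat_eq
      fun k => (inclMat F d j).transpose * y k * inclMat F d i
    obtain rfl : blockJets F d n j i x = y := funext fun k => by
      rw [blockJets_apply, hx, blockEmbed_transpose_inclMat_mul_mul, hblock]
    refine ⟨x, LinearMap.mem_ker.2 (coeffMat_ext fun k hk => blockEmbed_injective j i ?_), rfl⟩
    rw [← coeff_commutator_blockJets ξ j i x hk, PowerSeries.X_pow_dvd_iff.1 hcomm k hk, map_zero,
      map_zero]

lemma finrank_ker_intertwine (ξ : ∀ i, Matrix (Fin (d i)) (Fin (d i)) (TruncRing F n))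
    (j i : V) :
    finrank F (LinearMap.ker (intertwine F (ξ j) (ξ i))) =
      jetWeight (blockDiagonalMap F d) (fun A => finrank F (matBlock Sigma.fst A i j))
        (jets ξ) := by
  rw [LinearEquiv.finrank_eq (Submodule.equivMapOfInjective _ (blockJets_injective j i) _),
    map_blockJets_ker_intertwine, finrank_commutingJets (isIdempotentElem_colorIdem _ _)
      (isIdempotentElem_colorIdem _ _) (commute_colorIdem_coeff_jetSeries j (jets ξ))
      (commute_colorIdem_coeff_jetSeries i (jets ξ))]
  rfl

end Intertwine

section TracePairing

variable {F : Type} [Field F] {l m : Type*} [Fintype l] [Fintype m] {n : ℕ}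

/-- The pairing of rectangular matrices over `F[t]/(t^(n+1))` by the top coefficient of the
trace of the product. -/
noncomputable def tracePairing (F : Type) [Field F] (n : ℕ) (l m : Type*) [Fintype l]
    [Fintype m] :
    Matrix l m (TruncRing F (n + 1)) →ₗ[F] Matrix m l (TruncRing F (n + 1)) →ₗ[F] F :=
  LinearMap.mk₂ F (fun z y => truncCoeff F (n + 1) n (z * y).trace)
    (fun z z' y => by rw [Matrix.add_mul, Matrix.trace_add, map_add])
    (fun c z y => by rw [Matrix.smul_mul, Matrix.trace_smul, map_smul])
    (fun z y y' => by rw [Matrix.mul_add, Matrix.trace_add, map_add])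
    (fun c z y => by rw [Matrix.mul_smul, Matrix.trace_smul, map_smul])

lemma tracePairing_apply (z : Matrix l m (TruncRing F (n + 1)))
    (y : Matrix m l (TruncRing F (n + 1))) :
    tracePairing F n l m z y = truncCoeff F (n + 1) n (z * y).trace := rfl

lemma separatingRight_tracePairing : (tracePairing F n l m).SeparatingRight := by
  classical
  intro y hy
  ext a b
  refine eq_zero_of_forall_truncCoeff_mul_eq_zero fun r => ?_
  have hab := hy (Matrix.single b a r)
  rwa [tracePairing_apply, Matrix.trace_single_mul, smul_eq_mul, mul_comm] at hab

lemma separatingLeft_tracePairing : (tracePairing F n l m).SeparatingLeft := fun z hz =>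
  separatingRight_tracePairing z fun y => by
    rw [tracePairing_apply, Matrix.trace_mul_comm]
    exact hz y

lemma tracePairing_intertwine (u : Matrix l l (TruncRing F (n + 1)))
    (v : Matrix m m (TruncRing F (n + 1))) (z : Matrix m l (TruncRing F (n + 1)))
    (x : Matrix l m (TruncRing F (n + 1))) :
    tracePairing F n m l z (intertwine F u v x) =
      tracePairing F n m l ((-intertwine F v u) z) x := by
  rw [tracePairing_apply, tracePairing_apply, LinearMap.neg_apply, intertwine_apply,
    intertwine_apply, neg_sub, Matrix.mul_sub, Matrix.sub_mul, Matrix.trace_sub,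
    Matrix.trace_sub, ← Matrix.mul_assoc, ← Matrix.mul_assoc, Matrix.mul_assoc v,
    Matrix.trace_mul_comm v]

lemma finrank_ker_intertwine_comm (u : Matrix l l (TruncRing F n))
    (v : Matrix m m (TruncRing F n)) :
    finrank F (LinearMap.ker (intertwine F u v)) =
      finrank F (LinearMap.ker (intertwine F v u)) := by
  obtain _ | n := n
  · have huv := Submodule.finrank_le (LinearMap.ker (intertwine F u v))
    have hvu := Submodule.finrank_le (LinearMap.ker (intertwine F v u))
    rw [finrank_matrix, finrank_truncRing, mul_zero, Nat.le_zero] at huv hvu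
    rw [huv, hvu]
  · have hadj := finrank_ker_add_finrank_of_adjoint separatingLeft_tracePairing
      separatingRight_tracePairing (tracePairing_intertwine u v)
    rw [LinearMap.ker_neg, finrank_matrix, finrank_matrix, mul_comm (Fintype.card m),
      add_comm] at hadj
    exact Nat.add_left_cancel hadj

end TracePairing

section StageSymmetry

variable {F : Type} [Field F] {V : Type*} [DecidableEq V] [Fintype V] {d : V → ℕ} {n : ℕ}

lemma jetWeight_finrank_matBlock_comm (ζ : Fin n → ∀ i, Matrix (Fin (d i)) (Fin (d i)) F)
    (i j : V) :
    jetWeight (blockDiagonalMap F d) (fun A => finrank F (matBlock Sigma.fst A i j)) ζ =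
      jetWeight (blockDiagonalMap F d) (fun A => finrank F (matBlock Sigma.fst A j i)) ζ := by
  obtain ⟨ξ, rfl⟩ := jets_bijective.2 ζ
  rw [← finrank_ker_intertwine, ← finrank_ker_intertwine, finrank_ker_intertwine_comm]

lemma finrank_matBlock_jetStage_comm (ζ : Fin n → ∀ i, Matrix (Fin (d i)) (Fin (d i)) F)
    (i j : V) :
    finrank F (matBlock Sigma.fst (jetStage (blockDiagonalMap F d) ζ) i j) =
      finrank F (matBlock Sigma.fst (jetStage (blockDiagonalMap F d) ζ) j i) := by
  obtain _ | n := n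
  · rw [jetStage, stage_zero, finrank_matBlock_top, finrank_matBlock_top, mul_comm]
  · have hweight := jetWeight_finrank_matBlock_comm ζ i j
    rw [← Fin.snoc_init_self ζ, jetWeight_snoc, jetWeight_snoc,
      jetWeight_finrank_matBlock_comm (Fin.init ζ), Fin.snoc_init_self] at hweight
    exact Nat.add_left_cancel hweight

end StageSymmetry

/-! ### The estimate for quivers with property (P) -/

section JetEstimate

variable {F : Type} [Field F] {G : FinQuiver} {d : G.V → ℕ}

/-- The total dimension of the blocks of a subalgebra indexed by the arrows: the exponent that a
stage contributes to the number of representations commuting with a jet. -/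
noncomputable def arrowRank (F : Type) [Field F] (G : FinQuiver) (d : G.V → ℕ)
    (A : Subalgebra F (Matrix (Σ i, Fin (d i)) (Σ i, Fin (d i)) F)) : ℕ :=
  ∑ a : G.E, finrank F (matBlock Sigma.fst A (G.s a) (G.t a))

lemma arrowRank_top : arrowRank F G d ⊤ = ∑ a : G.E, d (G.s a) * d (G.t a) :=
  Finset.sum_congr rfl fun _ _ => finrank_matBlock_top F d _ _

lemma finrank_pi_squareMatrix {V : Type*} [Fintype V] (d : V → ℕ) (R : Type*) [CommRing R]
    [Algebra F R] [FiniteDimensional F R] :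
    finrank F (∀ i, Matrix (Fin (d i)) (Fin (d i)) R) = (∑ i, d i * d i) * finrank F R := by
  rw [finrank_pi_fintype, Finset.sum_mul]
  refine Finset.sum_congr rfl fun i _ => ?_
  rw [finrank_matrix, Fintype.card_fin]

lemma finrank_ker_add_arrowRank_le (hP : PropertyP G d) {n : ℕ}
    (ζ : Fin (n + 1) → ∀ i, Matrix (Fin (d i)) (Fin (d i)) F)
    (hζ : blockDiagonalMap F d (ζ 0) ∉
      (⊥ : Subalgebra F (Matrix (Σ i, Fin (d i)) (Σ i, Fin (d i)) F))) :
    finrank F (LinearMap.ker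
        (commPairing (blockDiagonalMap F d) (jetStage (blockDiagonalMap F d) ζ))) +
      arrowRank F G d (jetStage (blockDiagonalMap F d) ζ) ≤ arrowRank F G d ⊤ := by
  have hcoeff : PowerSeries.coeff 0 (jetSeries (blockDiagonalMap F d) ζ) =
      blockDiagonalMap F d (ζ 0) :=
    coeff_finSeries_of_lt _ n.succ_pos
  have hcomm (a) (ha : a ∈ jetStage (blockDiagonalMap F d) ζ) :
      Commute a (blockDiagonalMap F d (ζ 0)) :=
    hcoeff ▸ commute_coeff_zero_of_mem_stage ha
  have hfibre := finrank_ker_commPairing_add_le (colorIdem_mem_jetStage ζ)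
    (colorIdem_mul_mul_mem_range_blockDiagonalMap (F := F) (d := d))
  have hdefect := finrank_commuting_estimate hP (colorIdem_mem_jetStage ζ)
    (finrank_matBlock_jetStage_comm ζ) hcomm
    fun ⟨k, hk⟩ => hζ (Algebra.mem_bot.2 ⟨k, hk.symm⟩)
  have hdim := finrank_pi_squareMatrix (F := F) d F
  rw [finrank_self, mul_one] at hdim
  rw [hdim] at hfibre
  rw [arrowRank_top, arrowRank]
  omega

variable [Fintype F]

open Classical in
lemma card_blockDiagonalMap_mem_bot (hd : d ≠ 0) :
    Finset.card {c : ∀ i, Matrix (Fin (d i)) (Fin (d i)) F | blockDiagonalMap F d c ∈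
      (⊥ : Subalgebra F (Matrix (Σ i, Fin (d i)) (Σ i, Fin (d i)) F))} = Fintype.card F := by
  obtain ⟨i, hi⟩ := Function.ne_iff.1 hd
  have : Nonempty (Fin (d i)) := ⟨⟨0, Nat.pos_of_ne_zero hi⟩⟩
  rw [← Finset.card_univ, eq_comm]
  refine Finset.card_bij (fun z _ _ => algebraMap F _ z) (fun z _ => ?_) (fun z _ w _ h => ?_)
    fun c hc => ?_
  · exact Finset.mem_filter.2
      ⟨Finset.mem_univ _, Algebra.mem_bot.2 ⟨z, (blockDiagonalMap_algebraMap z).symm⟩⟩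
  · exact (algebraMap F (Matrix (Fin (d i)) (Fin (d i)) F)).injective (congrFun h i)
  · obtain ⟨z, hz⟩ := Algebra.mem_bot.1 (Finset.mem_filter.1 hc).2
    exact ⟨z, Finset.mem_univ _,
      blockDiagonalMap_injective ((blockDiagonalMap_algebraMap z).trans hz)⟩

open Classical in
lemma card_jetStage_snoc_eq_mul_le (hP : PropertyP G d) {n : ℕ}
    (ζ : Fin (n + 1) → ∀ i, Matrix (Fin (d i)) (Fin (d i)) F)
    (A : Subalgebra F (Matrix (Σ i, Fin (d i)) (Σ i, Fin (d i)) F))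
    (hζ : blockDiagonalMap F d (ζ 0) ∉
      (⊥ : Subalgebra F (Matrix (Σ i, Fin (d i)) (Σ i, Fin (d i)) F))) :
    Finset.card {η | jetStage (blockDiagonalMap F d)
          (Fin.snoc ζ η : Fin (n + 1 + 1) → ∀ i, Matrix (Fin (d i)) (Fin (d i)) F) = A} *
        Fintype.card F ^ arrowRank F G d A ≤ Fintype.card F ^ arrowRank F G d ⊤ := by
  obtain hempty | ⟨η, hη⟩ := Finset.eq_empty_or_nonempty {η | jetStage (blockDiagonalMap F d)
    (Fin.snoc ζ η : Fin (n + 1 + 1) → ∀ i, Matrix (Fin (d i)) (Fin (d i)) F) = A}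
  · rw [hempty, Finset.card_empty, Nat.zero_mul]
    exact Nat.zero_le _
  obtain rfl := (Finset.mem_filter.1 hη).2
  have hzero : (Fin.snoc ζ η : Fin (n + 1 + 1) → ∀ i, Matrix (Fin (d i)) (Fin (d i)) F) 0 =
      ζ 0 :=
    Fin.snoc_castSucc (α := fun _ => ∀ i, Matrix (Fin (d i)) (Fin (d i)) F) η ζ 0
  refine (Nat.mul_le_mul_right _ (card_jetStage_snoc_eq_le _ ζ _)).trans ?_
  rw [← pow_add]
  exact Nat.pow_le_pow_right Fintype.card_pos
    (finrank_ker_add_arrowRank_le hP _ (by rwa [hzero]))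

lemma exists_tendsto_jetSum_blockDiagonalMap (hd : d ≠ 0) (hP : PropertyP G d) :
    ∃ L : ℝ, Filter.Tendsto
      (fun n => jetSum (Fintype.card F : ℝ) (blockDiagonalMap F d) (arrowRank F G d) n /
        ((Fintype.card F : ℝ) ^ (∑ a : G.E, d (G.s a) * d (G.t a) + 1)) ^ n)
      Filter.atTop (nhds L) := by
  classical
  have : Finite (Subalgebra F (Matrix (Σ i, Fin (d i)) (Σ i, Fin (d i)) F)) :=
    Finite.of_injective _ SetLike.coe_injective
  rw [← arrowRank_top (F := F)]
  refine exists_tendsto_jetSum_div (by exact_mod_cast Fintype.one_lt_card)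
    (congrArg _ (by convert card_blockDiagonalMap_mem_bot hd)) fun n ζ A hζ => ?_
  have hcount := card_jetStage_snoc_eq_mul_le hP ζ A hζ
  exact_mod_cast hcount

end JetEstimate

/-! ### The zero fibre of the moment map -/

section PiPairing

variable {F ι : Type*} [Field F] [Fintype ι] {X X' : ι → Type*}
  [∀ a, AddCommGroup (X' a)] [∀ a, Module F (X' a)] [∀ a, AddCommGroup (X a)]
  [∀ a, Module F (X a)] {p : ∀ a, X' a →ₗ[F] X a →ₗ[F] F}

/-- The orthogonal sum of a finite family of pairings. -/
def piPairing (p : ∀ a, X' a →ₗ[F] X a →ₗ[F] F) : (∀ a, X' a) →ₗ[F] (∀ a, X a) →ₗ[F] F :=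
  ∑ a, (p a).compl₁₂ (LinearMap.proj a) (LinearMap.proj a)

lemma piPairing_apply (z : ∀ a, X' a) (y : ∀ a, X a) :
    piPairing p z y = ∑ a, p a (z a) (y a) := by
  simp only [piPairing, LinearMap.sum_apply, LinearMap.compl₁₂_apply, LinearMap.proj_apply]

lemma separatingRight_piPairing (hp : ∀ a, (p a).SeparatingRight) :
    (piPairing p).SeparatingRight := by
  classical
  refine fun y hy => funext fun a => hp a _ fun z => ?_
  have hsingle := hy (Pi.single a z)
  rwa [piPairing_apply, Fintype.sum_eq_single a fun b hb => by
    rw [Pi.single_eq_of_ne hb, map_zero, LinearMap.zero_apply], Pi.single_eq_same] at hsingle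

lemma separatingLeft_piPairing (hp : ∀ a, (p a).SeparatingLeft) :
    (piPairing p).SeparatingLeft := by
  refine fun z hz => separatingRight_piPairing
    (fun a => LinearMap.flip_separatingRight.2 (hp a)) z fun y => ?_
  have hzy := hz y
  rwa [piPairing_apply] at hzy ⊢

end PiPairing

section Moment

variable {F : Type} [Field F] {G : FinQuiver} {d : G.V → ℕ}

lemma sum_trace_mul_sum_cast {R : Type*} [CommRing R] (f : G.E → G.V)
    (M : ∀ a, Matrix (Fin (d (f a))) (Fin (d (f a))) R)
    (ξ : ∀ i, Matrix (Fin (d i)) (Fin (d i)) R) :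
    ∑ i, (ξ i * ∑ a : G.E, if h : f a = i then
      cast (congrArg (fun v => Matrix (Fin (d v)) (Fin (d v)) R) h) (M a) else 0).trace =
      ∑ a, (ξ (f a) * M a).trace := by
  simp only [Matrix.mul_sum, Matrix.trace_sum]
  rw [Finset.sum_comm]
  refine Finset.sum_congr rfl fun a _ => ?_
  rw [Fintype.sum_eq_single (f a) fun i hi => ?_, dif_pos rfl, cast_eq]
  rw [dif_neg hi.symm, Matrix.mul_zero, Matrix.trace_zero]

lemma sum_trace_mul_momentMap {R : Type} [CommRing R] (x : QRep G R d) (y : QCoRep G R d)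
    (ξ : ∀ i, Matrix (Fin (d i)) (Fin (d i)) R) :
    ∑ i, (ξ i * momentMap G x y i).trace =
      ∑ a, ((ξ (G.t a) * x a - x a * ξ (G.s a)) * y a).trace := by
  simp only [momentMap, Matrix.mul_sub, Matrix.sub_mul, Matrix.trace_sub, Finset.sum_sub_distrib]
  rw [sum_trace_mul_sum_cast G.t, sum_trace_mul_sum_cast G.s]
  congr 1
  · simp only [Matrix.mul_assoc]
  · refine Finset.sum_congr rfl fun a _ => ?_
    rw [← Matrix.mul_assoc, Matrix.trace_mul_comm, Matrix.mul_assoc]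

/-- The moment map, as a linear function of its second argument. -/
noncomputable def momentLin (F : Type) [Field F] {R : Type} [CommRing R] [Algebra F R]
    (x : QRep G R d) : QCoRep G R d →ₗ[F] ∀ i, Matrix (Fin (d i)) (Fin (d i)) R :=
  LinearMap.pi fun i =>
    ∑ a, (if h : G.t a = i then
      (LinearEquiv.cast (R := F) (M := fun v => Matrix (Fin (d v)) (Fin (d v)) R) h).toLinearMap ∘ₗ
        mulLeftLinearMap _ F (x a) ∘ₗ LinearMap.proj a else 0) -
    ∑ a, if h : G.s a = i then
      (LinearEquiv.cast (R := F) (M := fun v => Matrix (Fin (d v)) (Fin (d v)) R) h).toLinearMap ∘ₗ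
        mulRightLinearMap _ F (x a) ∘ₗ LinearMap.proj a else 0

lemma momentLin_apply {R : Type} [CommRing R] [Algebra F R] (x : QRep G R d) (y : QCoRep G R d) :
    momentLin F x y = momentMap G x y := by
  ext1 i
  rw [momentLin, LinearMap.pi_apply, LinearMap.sub_apply, LinearMap.sum_apply,
    LinearMap.sum_apply, momentMap]
  congr 1 <;> refine Finset.sum_congr rfl fun a _ => ?_ <;> split_ifs <;> rfl

/-- The infinitesimal action of the square matrices at a representation. -/
noncomputable def actionLin (F : Type) [Field F] {R : Type} [CommRing R] [Algebra F R]
    (x : QRep G R d) : (∀ i, Matrix (Fin (d i)) (Fin (d i)) R) →ₗ[F] QRep G R d :=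
  LinearMap.pi fun a => mulRightLinearMap _ F (x a) ∘ₗ LinearMap.proj (G.t a) -
    mulLeftLinearMap _ F (x a) ∘ₗ LinearMap.proj (G.s a)

lemma actionLin_apply {R : Type} [CommRing R] [Algebra F R] (x : QRep G R d)
    (ξ : ∀ i, Matrix (Fin (d i)) (Fin (d i)) R) (a : G.E) :
    actionLin F x ξ a = intertwine F (ξ (G.t a)) (ξ (G.s a)) (x a) := rfl

variable {n : ℕ}

lemma finrank_ker_momentLin_add (x : QRep G (TruncRing F (n + 1)) d) :
    finrank F (LinearMap.ker (momentLin F x)) + (∑ i, d i * d i) * (n + 1) =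
      (∑ a, d (G.s a) * d (G.t a)) * (n + 1) + finrank F (LinearMap.ker (actionLin F x)) := by
  have hadj := finrank_ker_add_finrank_of_adjoint (f := momentLin F x) (f' := actionLin F x)
    (separatingLeft_piPairing fun a : G.E => separatingLeft_tracePairing (F := F) (n := n)
      (l := Fin (d (G.t a))) (m := Fin (d (G.s a))))
    (separatingRight_piPairing fun i : G.V => separatingRight_tracePairing (F := F) (n := n)
      (l := Fin (d i)) (m := Fin (d i))) fun ξ y => ?_
  · rw [finrank_pi_squareMatrix, finrank_truncRing, finrank_pi_fintype] at hadj
    rw [hadj, Finset.sum_mul]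
    congr 1
    refine Finset.sum_congr rfl fun a _ => ?_
    rw [finrank_matrix, Fintype.card_fin, Fintype.card_fin, finrank_truncRing]
  · simp only [piPairing_apply, tracePairing_apply, actionLin_apply, intertwine_apply,
      momentLin_apply, ← map_sum, sum_trace_mul_momentMap]

variable [Fintype F]

lemma card_ker_momentLin_mul (x : QRep G (TruncRing F (n + 1)) d) :
    Nat.card (LinearMap.ker (momentLin F x)) * Fintype.card F ^ ((∑ i, d i * d i) * (n + 1)) =
      Fintype.card F ^ ((∑ a, d (G.s a) * d (G.t a)) * (n + 1)) *
        Nat.card (LinearMap.ker (actionLin F x)) := by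
  rw [Module.natCard_eq_pow_finrank (K := F) (V := LinearMap.ker (momentLin F x)),
    Module.natCard_eq_pow_finrank (K := F) (V := LinearMap.ker (actionLin F x)),
    Nat.card_eq_fintype_card, ← pow_add, ← pow_add, finrank_ker_momentLin_add]

lemma card_actionLin_eq_zero (ξ : ∀ i, Matrix (Fin (d i)) (Fin (d i)) (TruncRing F n)) :
    Nat.card {x : QRep G (TruncRing F n) d // actionLin F x ξ = 0} =
      Fintype.card F ^ jetWeight (blockDiagonalMap F d) (arrowRank F G d) (jets ξ) := by
  have hequiv : {x : QRep G (TruncRing F n) d // actionLin F x ξ = 0} ≃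
      ∀ a, LinearMap.ker (intertwine F (ξ (G.t a)) (ξ (G.s a))) :=
    (Equiv.subtypeEquivRight fun x => funext_iff).trans (Equiv.subtypePiEquivPi
      (p := fun a y => y ∈ LinearMap.ker (intertwine F (ξ (G.t a)) (ξ (G.s a)))))
  have hcard (a) : Nat.card (LinearMap.ker (intertwine F (ξ (G.t a)) (ξ (G.s a)))) = _ :=
    (Module.natCard_eq_pow_finrank (K := F)).trans
      (congrArg₂ _ Nat.card_eq_fintype_card (finrank_ker_intertwine ξ (G.t a) (G.s a)))
  rw [Nat.card_congr hequiv, Nat.card_pi, Finset.prod_congr rfl fun a _ => hcard a,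
    Finset.prod_pow_eq_pow_sum]
  exact congrArg _ Finset.sum_comm

lemma sum_card_ker_actionLin [Fintype (QRep G (TruncRing F n) d)] :
    ((∑ x : QRep G (TruncRing F n) d, Nat.card (LinearMap.ker (actionLin F x)) : ℕ) : ℝ) =
      jetSum (Fintype.card F : ℝ) (blockDiagonalMap F d) (arrowRank F G d) n := by
  have := Fintype.ofFinite (∀ i, Matrix (Fin (d i)) (Fin (d i)) (TruncRing F n))
  have hswap : (Σ x : QRep G (TruncRing F n) d, LinearMap.ker (actionLin F x)) ≃
      Σ ξ : (∀ i, Matrix (Fin (d i)) (Fin (d i)) (TruncRing F n)),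
        {x : QRep G (TruncRing F n) d // actionLin F x ξ = 0} :=
    (Equiv.subtypeProdEquivSigmaSubtype fun x ξ => actionLin F x ξ = 0).symm.trans
      (((Equiv.prodComm _ _).subtypeEquiv fun _ => Iff.rfl).trans
        (Equiv.subtypeProdEquivSigmaSubtype fun ξ x => actionLin F x ξ = 0))
  rw [← Nat.card_sigma, Nat.card_congr hswap, Nat.card_sigma,
    Finset.sum_congr rfl fun ξ _ => card_actionLin_eq_zero ξ, Nat.cast_sum]
  exact Fintype.sum_bijective jets jets_bijective _ _ fun ξ => Nat.cast_pow _ _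

lemma card_momentMap_eq_zero_mul (F : Type) [Field F] [Fintype F] (G : FinQuiver)
    (d : G.V → ℕ) (n : ℕ) :
    (Nat.card {xy : QRep G (TruncRing F (n + 1)) d × QCoRep G (TruncRing F (n + 1)) d //
      ∀ i : G.V, momentMap G xy.1 xy.2 i = 0} : ℝ) *
        (Fintype.card F : ℝ) ^ ((∑ i, d i * d i) * (n + 1)) =
      (Fintype.card F : ℝ) ^ ((∑ a, d (G.s a) * d (G.t a)) * (n + 1)) *
        jetSum (Fintype.card F : ℝ) (blockDiagonalMap F d) (arrowRank F G d) (n + 1) := by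
  have := Fintype.ofFinite (QRep G (TruncRing F (n + 1)) d)
  have hfibre : {xy : QRep G (TruncRing F (n + 1)) d × QCoRep G (TruncRing F (n + 1)) d //
      ∀ i : G.V, momentMap G xy.1 xy.2 i = 0} ≃
      Σ x : QRep G (TruncRing F (n + 1)) d, LinearMap.ker (momentLin F x) :=
    (Equiv.subtypeEquivRight fun xy => by rw [momentLin_apply, funext_iff]; rfl).trans
      (Equiv.subtypeProdEquivSigmaSubtype fun x y => momentLin F x y = 0)
  rw [← sum_card_ker_actionLin, Nat.card_congr hfibre, Nat.card_sigma]
  norm_cast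
  rw [Finset.sum_mul, Finset.sum_congr rfl fun x _ => card_ker_momentLin_mul x, Finset.mul_sum]

end Moment

lemma neg_mul_dimension_eq (G : FinQuiver) (d : G.V → ℕ) (n : ℕ) :
    -(n : ℤ) * ((∑ i : G.V, (d i : ℤ) ^ 2) - 1 + 2 * (1 - eulerForm G d d)) =
      (((∑ i, d i * d i) * n : ℕ) : ℤ) - (((∑ a, d (G.s a) * d (G.t a)) * n : ℕ) : ℤ) -
        (((∑ a, d (G.s a) * d (G.t a) + 1) * n : ℕ) : ℤ) := by
  rw [eulerForm]
  push_cast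
  simp only [sq]
  ring

theorem jet_count_convergence_general (G : FinQuiver) (d : G.V → ℕ) (hd : d ≠ 0)
    (hP : PropertyP G d) (F : Type) [Field F] [Fintype F] :
    ∃ L : ℝ, Filter.Tendsto (fun n : ℕ =>
        (Fintype.card F : ℝ) ^
            (-(n : ℤ) * ((∑ i : G.V, (d i : ℤ) ^ 2) - 1 + 2 * (1 - eulerForm G d d))) *
          (Nat.card {xy : QRep G (TruncRing F n) d × QCoRep G (TruncRing F n) d //
              ∀ i : G.V, momentMap G xy.1 xy.2 i = 0} : ℝ))
      Filter.atTop (nhds L) := by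
  obtain ⟨L, hL⟩ := exists_tendsto_jetSum_blockDiagonalMap (F := F) hd hP
  refine ⟨L, (Filter.tendsto_add_atTop_iff_nat 1).1
    (((Filter.tendsto_add_atTop_iff_nat 1).2 hL).congr fun n => ?_)⟩
  have hq : (Fintype.card F : ℝ) ≠ 0 := Nat.cast_ne_zero.2 Fintype.card_ne_zero
  rw [neg_mul_dimension_eq, zpow_sub₀ hq, zpow_sub₀ hq, zpow_natCast, zpow_natCast,
    zpow_natCast, ← pow_mul, div_mul_eq_mul_div, div_mul_eq_mul_div,
    mul_comm _ (Nat.card _ : ℝ), card_momentMap_eq_zero_mul,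
    mul_div_cancel_left₀ _ (pow_ne_zero _ hq)]

/-- Let `Q` be a finite quiver and `d ∈ ℕ^{Q₀} ∖ {0}` such that `(Q,d)`
has property (P).  Set `D := Σ_i d_i² − 1 + 2(1 − ⟨d,d⟩)`.  Then there is a finite set
`S` of primes such that for every prime `p ∉ S` and every power `q` of `p` (i.e. every
finite field of characteristic `p`), the sequence
`n ↦ q^{−nD} · #{(x,y) over 𝔽_q[t]/(t^n) : μ(x,y) = 0}` converges as `n → ∞`. -/
theorem jet_count_convergence (G : FinQuiver) (d : G.V → ℕ) (hd : d ≠ 0)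
    (hP : PropertyP G d) :
    ∃ S : Finset ℕ, ∀ p : ℕ, p.Prime → p ∉ S →
      ∀ (F : Type) [Field F] [Fintype F], ringChar F = p →
        ∃ L : ℝ, Filter.Tendsto (fun n : ℕ =>
            (Fintype.card F : ℝ) ^
                (-(n : ℤ) * ((∑ i : G.V, (d i : ℤ) ^ 2) - 1 + 2 * (1 - eulerForm G d d))) *
              (Nat.card {xy : QRep G (TruncRing F n) d × QCoRep G (TruncRing F n) d //
                  ∀ i : G.V, momentMap G xy.1 xy.2 i = 0} : ℝ))
          Filter.atTop (nhds L) :=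
  ⟨∅, fun _ _ _ F _ _ _ => jet_count_convergence_general G d hd hP F⟩
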